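/- arXiv:2207.07485 — 2 statements merged into one kernel-verified Lean document; each statement's English description precedes it below -/
import Mathlib

section
/- (Direct approximation theorem) Let 1 ≤ p < ∞, 1 ≤ q < ∞, r ∈ ℕ and 0 < α < r. There exists a constant C > 0 such that for every f ∈ X^p: ∫₀^∞ (τ^α E_p(τ, f))^q dτ/τ ≤ C Σ_{j=1}^n ∫₀^∞ (s^{−α} ω^r_{j,p}(s, f))^q ds/s ≤ C ∫₀^∞ (s^{−α} Ω^r_p(s, f))^q ds/s. In particular, every f in the Besov–Mellin space B^α_{p,q} (i.e. with ‖f‖_{X^p} + (∫₀^∞ (s^{−α} Ω^r_p(s,f))^q ds/s)^{1/q} finite) belongs to the approximation space E_{α,q}(X^p, B), B = ∪_{σ>0} B^p_σ(Θ₁,…,Θₙ), and the embedding is continuous. -/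
/-!
In logarithmic coordinates `x_i = e^{y_i}` the Mellin space becomes `L^p(ℝⁿ)` and the `U_j` become
translations along the coordinate axes (`logLp_mellin`), so they are commuting strongly continuous
groups of isometries. Everything about approximation is then done for such groups on a Banach
space.

**Bernstein side.** Take Schwartz kernels `k`, `V` with `k` band-limited, `∫ k = 1`, and the
transform of `V` equal to `1` on the band of `k`. For a group `W` the Jackson operator `J` is
defined by `x - J x = ∫ k(t) (I - W(t))^r x dt`. Expanding the power, `J x` is a combination of
averages of `W` against dilates of `k`, all of which are fixed by the average `P x = ∫ V(t) W(t) x dt`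
(`jacksonOp_reproduce`). On the fixed space of `P` the generator is the average against `-V'`, hence
is bounded by `‖V'‖₁` (`genDeriv_groupAvg`). The sharp Bernstein constant is not needed: with
`c = ‖V'‖₁ + 1` and `W(t) = U(c t / σ)`, the generator of `U` is bounded by `σ` on that space.
Since the groups commute, `J₁ ⋯ Jₙ f` is fixed by all the `P_j`, and so are its derivatives; thus it
lies in the Bernstein–Mellin space of exponent `σ`.

**Error estimate.** The inequality `‖(U(t) - I)^r x‖ ≤ (1 + |t|/s)^r ω^r(s, x)`
(`IsIsomGroup.norm_diff_le`) and the moments of `k` give `‖f - J_j f‖ ≤ M₁ ω_j^r(σ⁻¹, f)`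
with `M₁` independent of `σ` and `f`.
Telescoping the product yields Jackson's inequality `E(σ, f) ≤ M ∑_j ω_j^r(σ⁻¹, f)`
(`jackson_inequality`).

**Integration.** The first inequality of the theorem follows by the substitution `s = τ⁻¹` and
convexity of `x ↦ x^q`. The second holds because the diagonal terms of the mixed modulus
are at least the partial moduli (`sum_omegaMod_le_mixedMod`) and `x ↦ x^q` is superadditive
for `q ≥ 1`.
-/

open MeasureTheory Filter Topology ENNReal

noncomputable section

/-- `g` is the value at `f` of the infinitesimal generator of the
strongly continuous one-parameter group `T`. -/
def GenDeriv {E : Type*} [NormedAddCommGroup E] [NormedSpace ℂ E]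
    (T : ℝ → E →L[ℂ] E) (f g : E) : Prop :=
  Filter.Tendsto (fun t : ℝ => t⁻¹ • (T t f - f)) (𝓝[≠] (0 : ℝ)) (𝓝 g)

/-- The measure `dμ = dx₁⋯dxₙ/(x₁⋯xₙ)` on `(0,∞)ⁿ ⊂ ℝⁿ`. -/
def mellinMeasure (n : ℕ) : Measure (Fin n → ℝ) :=
  ((volume : Measure (Fin n → ℝ)).restrict {x | ∀ i, 0 < x i}).withDensity
    fun x => ∏ i, ENNReal.ofReal (x i)⁻¹

/-- Dilation of the `j`-th coordinate by `e^t`. -/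
def mellinDilate {n : ℕ} (j : Fin n) (t : ℝ) (x : Fin n → ℝ) : Fin n → ℝ :=
  Function.update x j (Real.exp t * x j)

/-- `U` is the family of Mellin translation groups `(U_j(t)f)(x) = f(x₁,…,e^t x_j,…,xₙ)`. -/
def IsMellinTranslation {n : ℕ} (p : ℝ≥0∞) [Fact (1 ≤ p)]
    (U : Fin n → ℝ → (Lp ℂ p (mellinMeasure n) →L[ℂ] Lp ℂ p (mellinMeasure n))) : Prop :=
  ∀ (j : Fin n) (t : ℝ) (f : Lp ℂ p (mellinMeasure n)),
    (U j t f : (Fin n → ℝ) → ℂ) =ᵐ[mellinMeasure n] fun x => f (mellinDilate j t x)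

/-- Iterated generator: `IsIterDeriv U [j₁,…,j_k] f g` means `g = Θ_{j₁}⋯Θ_{j_k} f`. -/
def IsIterDeriv {E : Type*} [NormedAddCommGroup E] [NormedSpace ℂ E] {n : ℕ}
    (U : Fin n → ℝ → E →L[ℂ] E) : List (Fin n) → E → E → Prop
  | [], f, g => g = f
  | j :: L, f, g => ∃ h, IsIterDeriv U L f h ∧ GenDeriv (U j) h g

/-- Modulus of continuity `ω^m(s,f) = sup_{0≤τ≤s} ‖(T(τ)-I)^m f‖`. -/
def omegaMod {E : Type*} [NormedAddCommGroup E] [NormedSpace ℂ E]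
    (T : ℝ → E →L[ℂ] E) (m : ℕ) (s : ℝ) (f : E) : ℝ :=
  sSup ((fun τ => ‖((T τ - 1) ^ m) f‖) '' Set.Icc 0 s)

/-- Mixed modulus of continuity
`Ω^r(s,f) = Σ_{j₁,…,j_r} sup_{0≤τᵢ≤s} ‖(U_{j₁}(τ₁)-I)⋯(U_{j_r}(τ_r)-I) f‖`. -/
def mixedMod {E : Type*} [NormedAddCommGroup E] [NormedSpace ℂ E] {n : ℕ}
    (U : Fin n → ℝ → E →L[ℂ] E) (r : ℕ) (s : ℝ) (f : E) : ℝ :=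
  ∑ J : Fin r → Fin n,
    sSup ((fun τ : Fin r → ℝ => ‖((List.ofFn fun i => U (J i) (τ i) - 1).prod) f‖) ''
      Set.univ.pi fun _ => Set.Icc 0 s)

/-- The list `[1,…,1,2,…,2,…]` encoding the operator `Θ₁^{a₁}⋯Θₙ^{aₙ}`. -/
def multiIndexList {n : ℕ} (a : Fin n → ℕ) : List (Fin n) :=
  (List.ofFn fun i => List.replicate (a i) i).flatten

/-- `f` belongs to the Sobolev–Mellin space `W^r`: all derivatives `Θ₁^{a₁}⋯Θₙ^{aₙ} f`
with `|a| = r` exist. -/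
def memW {E : Type*} [NormedAddCommGroup E] [NormedSpace ℂ E] {n : ℕ}
    (U : Fin n → ℝ → E →L[ℂ] E) (r : ℕ) (f : E) : Prop :=
  ∀ a : Fin n → ℕ, (∑ i, a i) = r → ∃ g, IsIterDeriv U (multiIndexList a) f g

/-- The value `Θ_{j₁}⋯Θ_{j_k} f` (or `0` if it does not exist). -/
def iterDerivVal {E : Type*} [NormedAddCommGroup E] [NormedSpace ℂ E] {n : ℕ}
    (U : Fin n → ℝ → E →L[ℂ] E) (L : List (Fin n)) (f : E) : E :=
  haveI := Classical.propDecidable (∃ g, IsIterDeriv U L f g)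
  if h : ∃ g, IsIterDeriv U L f g then h.choose else 0

/-- The Sobolev–Mellin norm `‖f‖ + Σ_{|a|=r} ‖Θ₁^{a₁}⋯Θₙ^{aₙ} f‖` (for `r = 0` it is `‖f‖`). -/
def WNorm {E : Type*} [NormedAddCommGroup E] [NormedSpace ℂ E] {n : ℕ}
    (U : Fin n → ℝ → E →L[ℂ] E) (r : ℕ) (f : E) : ℝ :=
  ‖f‖ + ∑ a ∈ (Fintype.piFinset fun _ : Fin n => Finset.range (r + 1)).filter
      (fun a => (∑ i, a i) = r ∧ r ≠ 0),
    ‖iterDerivVal U (multiIndexList a) f‖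

/-- Peetre's K-functional for the pair `(X^p, W^r_p)`. -/
def Kfun {E : Type*} [NormedAddCommGroup E] [NormedSpace ℂ E] {n : ℕ}
    (U : Fin n → ℝ → E →L[ℂ] E) (r : ℕ) (t : ℝ) (f : E) : ℝ :=
  sInf {v | ∃ f₀ f₁ : E, f = f₀ + f₁ ∧ memW U r f₁ ∧ v = ‖f₀‖ + t * WNorm U r f₁}

/-- `g` belongs to the Bernstein–Mellin space `B^p_σ(Θ₁,…,Θₙ)`: every iterated Mellin
derivative of `g` exists and `‖Θ_{j₁}^{l₁}⋯Θ_{j_k}^{l_k} g‖ ≤ σ^{l₁+⋯+l_k} ‖g‖`. -/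
def memBernsteinMellin {E : Type*} [NormedAddCommGroup E] [NormedSpace ℂ E] {n : ℕ}
    (U : Fin n → ℝ → E →L[ℂ] E) (σ : ℝ) (g : E) : Prop :=
  ∀ L : List (Fin n), ∃ h, IsIterDeriv U L g h ∧ ‖h‖ ≤ σ ^ L.length * ‖g‖

/-- Best approximation `E_p(σ,f) = inf {‖f - g‖ : g ∈ B^p_σ(Θ₁,…,Θₙ)}`. -/
def bestApproxMellin {E : Type*} [NormedAddCommGroup E] [NormedSpace ℂ E] {n : ℕ}
    (U : Fin n → ℝ → E →L[ℂ] E) (σ : ℝ) (f : E) : ℝ :=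
  sInf ((fun g => ‖f - g‖) '' {g | memBernsteinMellin U σ g})

/-! ### Band-limited kernels -/

open scoped FourierTransform SchwartzMap ContDiff in
theorem exists_schwartz_bump (a b : ℝ) (ha : 0 < a) (hab : a < b) :
    ∃ φ : 𝓢(ℝ, ℂ), (∀ ξ, |ξ| ≤ a → φ ξ = 1) ∧ ∀ ξ, b ≤ |ξ| → φ ξ = 0 := by
  let B : ContDiffBump (0 : ℝ) := ⟨a, b, ha, hab⟩
  have h1 : HasCompactSupport (fun x : ℝ => ((B x : ℝ) : ℂ)) :=
    B.hasCompactSupport.comp_left (g := fun x : ℝ => (x : ℂ)) (by simp)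
  have h2 : ContDiff ℝ ∞ (fun x : ℝ => ((B x : ℝ) : ℂ)) :=
    Complex.ofRealCLM.contDiff.comp (B.contDiff (n := ⊤))
  refine ⟨h1.toSchwartzMap h2, fun ξ hξ => ?_, fun ξ hξ => ?_⟩
  · have : B ξ = 1 := B.one_of_mem_closedBall (by simpa [B] using hξ)
    change ((B ξ : ℝ) : ℂ) = 1
    simp [this]
  · have : ξ ∉ Function.support B := by rw [B.support_eq]; simpa [B] using hξ
    change ((B ξ : ℝ) : ℂ) = 0
    simpa using this

open scoped FourierTransform SchwartzMap ContDiff in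
/-- The kernels of the construction: `k` is the Fourier transform of a bump `φ` with `φ(0) = 1`
supported in `[-1,1]`, and `V`, with derivative `V'`, that of a bump `ψ` equal to `1` on `[-1,1]`.
As `ψ(ξ/m) = 1` on the support of `φ` for `m ≥ 1`, convolution with `V` reproduces every dilate
`k(·/m)`. -/
theorem exists_kernels : ∃ k V V' : ℝ → ℂ,
    Integrable k ∧ (∀ N : ℕ, Integrable fun t => |t| ^ N * ‖k t‖) ∧ ∫ t, k t = 1 ∧
    Integrable V ∧ (∀ t, HasDerivAt V (V' t) t) ∧ Continuous V' ∧
    (∃ C, ∀ t, ‖V' t‖ ≤ C * (1 + t ^ 2)⁻¹) ∧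
    ∀ m : ℝ, 1 ≤ m → ∀ u, ∫ s, V s * k ((u - s) / m) = k (u / m) := by
  obtain ⟨φ, hφ1, hφ0⟩ := exists_schwartz_bump (1 / 2) 1 (by norm_num) (by norm_num)
  obtain ⟨ψ, hψ1, -⟩ := exists_schwartz_bump 1 2 (by norm_num) (by norm_num)
  have hinv : ∀ χ : 𝓢(ℝ, ℂ), ∀ ξ : ℝ,
      ∫ s, (𝓕 χ) s * Complex.exp (↑(2 * Real.pi * ξ * s) * Complex.I) = χ ξ := by
    intro χ ξ
    have h := congrArg (fun g : 𝓢(ℝ, ℂ) => g ξ) (FourierPair.fourierInv_fourier_eq (F := 𝓢(ℝ, ℂ)) χ)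
    simp only [SchwartzMap.fourierInv_coe, Real.fourierInv_eq'] at h
    rw [← h]
    refine integral_congr_ae (ae_of_all _ fun s => ?_)
    simp only [smul_eq_mul, RCLike.inner_apply, conj_trivial]
    rw [mul_comm]; congr 4; ring
  have hk : ∀ v, (𝓕 φ) v = ∫ ξ, φ ξ * Complex.exp (↑(-2 * Real.pi * ξ * v) * Complex.I) := by
    intro v
    rw [SchwartzMap.fourier_coe, Real.fourier_real_eq_integral_exp_smul]
    simp only [smul_eq_mul, mul_comm]
  refine ⟨⇑(𝓕 φ : 𝓢(ℝ, ℂ)), ⇑(𝓕 ψ : 𝓢(ℝ, ℂ)), SchwartzMap.derivCLM ℂ ℂ (𝓕 ψ), SchwartzMap.integrable _,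
    fun N => by simpa using SchwartzMap.integrable_pow_mul volume (𝓕 φ) N, ?_,
    SchwartzMap.integrable _, fun t => ?_, SchwartzMap.continuous _, ?_, ?_⟩
  · have := hinv φ 0
    rw [hφ1 0 (by norm_num)] at this
    simpa using this
  · rw [SchwartzMap.derivCLM_apply]
    exact (SchwartzMap.differentiableAt _).hasDerivAt
  · obtain ⟨C0, -, h0⟩ := (SchwartzMap.derivCLM ℂ ℂ (𝓕 ψ)).decay 0 0
    obtain ⟨C2, -, h2⟩ := (SchwartzMap.derivCLM ℂ ℂ (𝓕 ψ)).decay 2 0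
    refine ⟨C0 + C2, fun t => ?_⟩
    have h0 := h0 t
    have h2 := h2 t
    simp only [norm_iteratedFDeriv_zero, Real.norm_eq_abs, sq_abs, pow_zero, one_mul] at h0 h2
    rw [← div_eq_mul_inv, le_div_iff₀ (by positivity)]
    linarith
  · intro m hm u
    have hm0 : 0 < m := by linarith
    let F : ℝ → ℝ → ℂ := fun s ξ => ((𝓕 ψ) s * φ ξ) *
      Complex.exp (↑(-2 * Real.pi * ξ * ((u - s) / m)) * Complex.I)
    have hF : Integrable (Function.uncurry F) (volume.prod volume) := by
      have h1 : Integrable (fun z : ℝ × ℝ => (𝓕 ψ) z.1 * φ z.2) (volume.prod volume) :=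
        Integrable.mul_prod (SchwartzMap.integrable _) (SchwartzMap.integrable _)
      refine h1.mul_bdd (c := 1) (g := fun z : ℝ × ℝ => Complex.exp
        (↑(-2 * Real.pi * z.2 * ((u - z.1) / m)) * Complex.I)) ?_ ?_
      · exact Continuous.aestronglyMeasurable (by fun_prop)
      · exact ae_of_all _ fun z => (Complex.norm_exp_ofReal_mul_I _).le
    calc ∫ s, (𝓕 ψ) s * (𝓕 φ) ((u - s) / m) = ∫ s, ∫ ξ, F s ξ := by
          refine integral_congr_ae (ae_of_all _ fun s => ?_)
          simp only [hk, F, ← integral_const_mul, mul_assoc]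
      _ = ∫ ξ, ∫ s, F s ξ := integral_integral_swap hF
      _ = ∫ ξ, φ ξ * Complex.exp (↑(-2 * Real.pi * ξ * (u / m)) * Complex.I) := by
          refine integral_congr_ae (ae_of_all _ fun ξ => ?_)
          have h1 : ∀ s, F s ξ =
              (φ ξ * Complex.exp (↑(-2 * Real.pi * ξ * (u / m)) * Complex.I)) *
              ((𝓕 ψ) s * Complex.exp (↑(2 * Real.pi * (ξ / m) * s) * Complex.I)) := by
            intro s
            have : Complex.exp (↑(-2 * Real.pi * ξ * ((u - s) / m)) * Complex.I) =
              Complex.exp (↑(-2 * Real.pi * ξ * (u / m)) * Complex.I) *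
              Complex.exp (↑(2 * Real.pi * (ξ / m) * s) * Complex.I) := by
                rw [← Complex.exp_add, ← add_mul, ← Complex.ofReal_add]
                congr 3; ring
            simp only [F, this]; ring
          simp only [h1]
          rw [integral_const_mul, hinv]
          -- the factor `ψ (ξ / m)` is `1` wherever `φ ξ ≠ 0`, because `m ≥ 1`
          rcases le_or_gt 1 |ξ| with h | h
          · simp [hφ0 ξ h]
          · rw [hψ1, mul_one]
            rw [abs_div, abs_of_pos hm0, div_le_one hm0]
            linarith
      _ = (𝓕 φ) (u / m) := (hk _).symm

/-- A strongly continuous one-parameter group of isometries. -/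
structure IsIsomGroup {E : Type*} [NormedAddCommGroup E] [NormedSpace ℂ E]
    (W : ℝ → E →L[ℂ] E) : Prop where
  zero : W 0 = 1
  add : ∀ s t, W (s + t) = W s * W t
  norm : ∀ t x, ‖W t x‖ = ‖x‖
  cont : ∀ x, Continuous fun t => W t x

section Abstract

variable {E : Type*} [NormedAddCommGroup E] [NormedSpace ℂ E] {W : ℝ → E →L[ℂ] E}

theorem IsIsomGroup.scale (hW : IsIsomGroup W) (a : ℝ) : IsIsomGroup fun t => W (a * t) where
  zero := by simpa using hW.zero
  add s t := by rw [mul_add, hW.add]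
  norm t x := hW.norm _ x
  cont x := (hW.cont x).comp (by fun_prop)

theorem IsIsomGroup.commute (hW : IsIsomGroup W) (s t : ℝ) : Commute (W s) (W t) := by
  rw [Commute, SemiconjBy, ← hW.add, ← hW.add, add_comm]

theorem IsIsomGroup.pow (hW : IsIsomGroup W) (t : ℝ) (m : ℕ) : W t ^ m = W (m * t) := by
  induction m with
  | zero => simp [hW.zero]
  | succ m ih => rw [pow_succ, ih, ← hW.add]; congr 1; push_cast; ring

theorem IsIsomGroup.opNorm_le (hW : IsIsomGroup W) (t : ℝ) : ‖W t‖ ≤ 1 :=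
  ContinuousLinearMap.opNorm_le_bound _ zero_le_one fun x => by rw [hW.norm, one_mul]

theorem IsIsomGroup.norm_pow_apply (hW : IsIsomGroup W) (t : ℝ) (m : ℕ) (x : E) :
    ‖(W t ^ m) x‖ = ‖x‖ := by rw [hW.pow, hW.norm]

/-! ### Differences and moduli of continuity -/

theorem diff_pow_eq (hW : IsIsomGroup W) (r : ℕ) (t : ℝ) (x : E) :
    ((1 - W t) ^ r) x = x - ∑ i ∈ Finset.range r,
      ((-1) ^ i * (r.choose (i + 1) : ℂ)) • W (((i : ℝ) + 1) * t) x := by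
  have h : (1 - W t) ^ r = ∑ m ∈ Finset.range (r + 1),
      ((-1) ^ m * (r.choose m : ℂ)) • W (m * t) := by
    rw [sub_eq_neg_add, (Commute.one_right (-W t)).add_pow]
    refine Finset.sum_congr rfl fun m _ => ?_
    rw [one_pow, mul_one, neg_pow, hW.pow]
    ext y
    rcases neg_one_pow_eq_or ℂ m with h | h <;>
    rcases Nat.even_or_odd m with e | e <;>
    simp [e.neg_one_pow, ← Nat.cast_smul_eq_nsmul ℂ, mul_comm]
  rw [h, sum_apply, Finset.sum_range_succ']
  simp only [smul_apply, pow_succ, Nat.cast_add, Nat.cast_one, mul_neg, mul_one,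
    neg_mul, neg_smul, Finset.sum_neg_distrib, pow_zero, Nat.choose_zero_right, one_smul,
    Nat.cast_zero, zero_mul, hW.zero, one_apply_eq_self,
    neg_apply]
  rw [neg_add_eq_sub]

theorem norm_one_sub_pow (W : ℝ → E →L[ℂ] E) (r : ℕ) (t : ℝ) (x : E) :
    ‖((1 - W t) ^ r) x‖ = ‖((W t - 1) ^ r) x‖ := by
  rw [← neg_sub (W t) 1, neg_pow, mul_apply_eq_comp]
  rcases neg_one_pow_eq_or (E →L[ℂ] E) r with h | h <;> simp [h]

theorem opNorm_pow_le (A : E →L[ℂ] E) (r : ℕ) : ‖A ^ r‖ ≤ ‖A‖ ^ r := by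
  induction r with
  | zero =>
    rw [pow_zero, pow_zero]
    exact ContinuousLinearMap.norm_id_le
  | succ r ih =>
    rw [pow_succ, pow_succ]
    exact (norm_mul_le _ _).trans (mul_le_mul_of_nonneg_right ih (norm_nonneg _))

theorem IsIsomGroup.bddAbove_omega (hW : IsIsomGroup W) (r : ℕ) (s : ℝ) (x : E) :
    BddAbove ((fun τ => ‖((W τ - 1) ^ r) x‖) '' Set.Icc 0 s) := by
  refine ⟨2 ^ r * ‖x‖, ?_⟩
  rintro _ ⟨t, -, rfl⟩
  refine ((W t - 1) ^ r).le_of_opNorm_le ?_ x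
  refine (opNorm_pow_le _ r).trans (pow_le_pow_left₀ (norm_nonneg _) ?_ r)
  refine (norm_sub_le _ _).trans ?_
  have h1 : ‖(1 : E →L[ℂ] E)‖ ≤ 1 := ContinuousLinearMap.norm_id_le
  linarith [hW.opNorm_le t]

theorem omegaMod_nonneg (W : ℝ → E →L[ℂ] E) (r : ℕ) (s : ℝ) (x : E) : 0 ≤ omegaMod W r s x := by
  refine Real.sSup_nonneg ?_
  rintro _ ⟨t, -, rfl⟩
  exact norm_nonneg _

theorem IsIsomGroup.le_omegaMod (hW : IsIsomGroup W) (r : ℕ) {s t : ℝ} (h0 : 0 ≤ t) (hts : t ≤ s)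
    (x : E) : ‖((W t - 1) ^ r) x‖ ≤ omegaMod W r s x :=
  le_csSup (hW.bddAbove_omega r s x) ⟨t, ⟨h0, hts⟩, rfl⟩

theorem IsIsomGroup.omegaMod_mono (hW : IsIsomGroup W) (r : ℕ) (x : E) :
    Monotone fun s => omegaMod W r s x := by
  intro s t hst
  refine Real.sSup_le ?_ (omegaMod_nonneg _ _ _ _)
  rintro _ ⟨u, hu, rfl⟩
  exact hW.le_omegaMod r hu.1 (hu.2.trans hst) x

/-- The classical inequality `‖(W(t) - I)^r x‖ ≤ (1 + |t| / s)^r ω^r(s, x)`: the factor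
`W(m t') - I = (∑_{i<m} W(t')^i) (W(t') - I)` costs `m ≤ 1 + |t| / s` in norm when `t = m t'`
with `0 ≤ t' ≤ s`. -/
theorem IsIsomGroup.norm_diff_le (hW : IsIsomGroup W) (r : ℕ) {s : ℝ} (hs : 0 < s) (t : ℝ)
    (x : E) : ‖((W t - 1) ^ r) x‖ ≤ (1 + |t| / s) ^ r * omegaMod W r s x := by
  wlog ht : 0 ≤ t generalizing t
  · have key : (W t - 1) = W t * (-(W (-t) - 1)) := by
      rw [mul_neg, mul_sub, ← hW.add, add_neg_cancel, hW.zero, mul_one, neg_sub]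
    have hc : Commute (W t) (-(W (-t) - 1)) :=
      ((hW.commute _ _).sub_right (Commute.one_right _)).neg_right
    rw [key, hc.mul_pow, mul_apply_eq_comp, hW.norm_pow_apply, neg_pow,
      mul_apply_eq_comp]
    have h1 : ∀ y : E, ‖((-1 : E →L[ℂ] E) ^ r) y‖ = ‖y‖ := by
      intro y
      rcases neg_one_pow_eq_or (E →L[ℂ] E) r with h | h <;> simp [h]
    rw [h1]
    simpa using this (-t) (by linarith)
  set m : ℕ := ⌊t / s⌋₊ + 1 with hm
  have hm0 : (0 : ℝ) < m := by positivity
  have hm1 : (m : ℝ) ≤ 1 + |t| / s := by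
    rw [abs_of_nonneg ht, hm]
    push_cast
    linarith [Nat.floor_le (div_nonneg ht hs.le)]
  have hm2 : t / s ≤ m := by rw [hm]; push_cast; exact (Nat.lt_floor_add_one _).le
  have hts : t / m ≤ s := by
    rw [div_le_iff₀ hm0]
    rw [div_le_iff₀ hs] at hm2
    linarith
  set A : E →L[ℂ] E := W (t / m) with hA
  have hWt : W t = A ^ m := by rw [hA, hW.pow]; congr 1; field_simp
  set S : E →L[ℂ] E := ∑ i ∈ Finset.range m, A ^ i with hS
  have hSn : ‖S‖ ≤ m := by
    refine (norm_sum_le _ _).trans ?_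
    have : ∀ i ∈ Finset.range m, ‖A ^ i‖ ≤ 1 := fun i _ => by
      rw [hA, hW.pow]; exact hW.opNorm_le _
    simpa using Finset.sum_le_sum this
  have hcomm : Commute S (A - 1) := by
    refine Commute.sub_right (Commute.sum_left _ _ _ fun i _ => ?_) (Commute.one_right _)
    exact (Commute.refl A).pow_left i
  rw [hWt, ← geom_sum_mul A m, hcomm.mul_pow, mul_apply_eq_comp]
  calc ‖(S ^ r) (((A - 1) ^ r) x)‖ ≤ ‖S ^ r‖ * ‖((A - 1) ^ r) x‖ := (S ^ r).le_opNorm _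
    _ ≤ (1 + |t| / s) ^ r * omegaMod W r s x := by
        refine mul_le_mul ?_ (hW.le_omegaMod r (by positivity) hts x) (norm_nonneg _) (by positivity)
        exact (opNorm_pow_le _ r).trans (pow_le_pow_left₀ (norm_nonneg _) (hSn.trans hm1) r)

/-! ### Averages along a group -/

theorem IsIsomGroup.integrable (hW : IsIsomGroup W) {k : ℝ → ℂ} (hk : Integrable k) (x : E) :
    Integrable fun t => k t • W t x :=
  hk.smul_bdd ‖x‖ (hW.cont x).aestronglyMeasurable (ae_of_all _ fun t => (hW.norm t x).le)

theorem IsIsomGroup.norm_integral_le (hW : IsIsomGroup W) {k : ℝ → ℂ} (x : E) :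
    ‖∫ t, k t • W t x‖ ≤ (∫ t, ‖k t‖) * ‖x‖ := by
  refine (norm_integral_le_integral_norm _).trans ?_
  simp only [norm_smul, hW.norm, integral_mul_const]
  exact le_rfl

/-- The bounded operator `x ↦ ∫ k(t) W(t) x dt`. -/
def groupAvg (hW : IsIsomGroup W) {k : ℝ → ℂ} (hk : Integrable k) : E →L[ℂ] E :=
  LinearMap.mkContinuous
    { toFun := fun x => ∫ t, k t • W t x
      map_add' := fun x y => by
        simp only [map_add, smul_add]
        exact integral_add (hW.integrable hk x) (hW.integrable hk y)
      map_smul' := fun c x => by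
        simp only [map_smul, RingHom.id_apply]
        rw [← integral_smul]
        exact integral_congr_ae (ae_of_all _ fun t => smul_comm _ _ _) }
    (∫ t, ‖k t‖) fun x => hW.norm_integral_le x

theorem groupAvg_apply (hW : IsIsomGroup W) {k : ℝ → ℂ} (hk : Integrable k) (x : E) :
    groupAvg hW hk x = ∫ t, k t • W t x := rfl

theorem groupAvg_norm_le (hW : IsIsomGroup W) {k : ℝ → ℂ} (hk : Integrable k) (x : E) :
    ‖groupAvg hW hk x‖ ≤ (∫ t, ‖k t‖) * ‖x‖ := hW.norm_integral_le x

theorem groupAvg_scale_apply (hW : IsIsomGroup W) {k : ℝ → ℂ} (hk : Integrable k) {m : ℝ}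
    (hm : 0 < m) (x : E) :
    groupAvg (hW.scale m) hk x = ∫ u, ((m⁻¹ : ℂ) * k (u / m)) • W u x := by
  have h := Measure.integral_comp_mul_left (fun u => ((m⁻¹ : ℂ) * k (u / m)) • W u x) m
  rw [groupAvg_apply]
  have h2 : ∫ u, ((m⁻¹ : ℂ) * k (u / m)) • W u x
      = m • (|m⁻¹| • ∫ u, ((m⁻¹ : ℂ) * k (u / m)) • W u x) := by
    rw [smul_smul, abs_of_pos (by positivity), mul_inv_cancel₀ hm.ne', one_smul]
  rw [h2, ← h, ← integral_smul]
  refine integral_congr_ae (ae_of_all _ fun t => ?_)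
  simp only
  rw [mul_div_cancel_left₀ _ hm.ne', ← Complex.coe_smul, smul_smul, ← mul_assoc,
    mul_inv_cancel₀ (by exact_mod_cast hm.ne'), one_mul]

theorem GenDeriv.of_scale {U : ℝ → E →L[ℂ] E} {a : ℝ} (ha : a ≠ 0) {g h : E}
    (hg : GenDeriv (fun t => U (a * t)) g h) : GenDeriv U g ((a⁻¹ : ℂ) • h) := by
  have h1 : Tendsto (fun t : ℝ => a⁻¹ * t) (𝓝[≠] 0) (𝓝[≠] 0) := by
    refine tendsto_nhdsWithin_iff.2 ⟨?_, ?_⟩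
    · have : Continuous fun t : ℝ => a⁻¹ * t := by fun_prop
      simpa using (this.tendsto 0).mono_left nhdsWithin_le_nhds
    · filter_upwards [self_mem_nhdsWithin] with t ht
      exact mul_ne_zero (inv_ne_zero ha) ht
  have h2 := (hg.comp h1).const_smul (a⁻¹ : ℂ)
  refine h2.congr fun t => ?_
  simp only [Function.comp_apply]
  rw [mul_inv_cancel_left₀ ha, ← Complex.coe_smul, ← Complex.coe_smul, smul_smul]
  congr 1
  have : (a : ℂ) ≠ 0 := by exact_mod_cast ha
  push_cast
  field_simp

/-- The operator `J` with `(I - J) x = ∫ k(t) (I - W(t))^r x dt` when `∫ k = 1`, that is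
`J x = ∑_{1 ≤ m ≤ r} (-1)^{m+1} (r choose m) ∫ k(t) W(m t) x dt`. -/
def jacksonOp (hW : IsIsomGroup W) {k : ℝ → ℂ} (hk : Integrable k) (r : ℕ) : E →L[ℂ] E :=
  ∑ i ∈ Finset.range r, ((-1) ^ i * (r.choose (i + 1) : ℂ)) • groupAvg (hW.scale ((i : ℝ) + 1)) hk

theorem jacksonOp_norm_le (hW : IsIsomGroup W) {k : ℝ → ℂ} (hk : Integrable k) (r : ℕ) (x : E) :
    ‖jacksonOp hW hk r x‖ ≤ (∑ i ∈ Finset.range r, r.choose (i + 1) * ∫ t, ‖k t‖) * ‖x‖ := by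
  rw [jacksonOp, sum_apply, Finset.sum_mul]
  refine (norm_sum_le _ _).trans (Finset.sum_le_sum fun i _ => ?_)
  rw [smul_apply, norm_smul, norm_mul, norm_pow, norm_neg, norm_one, one_pow,
    one_mul, Complex.norm_natCast, mul_assoc]
  exact mul_le_mul_of_nonneg_left (groupAvg_norm_le _ hk x) (by positivity)

/-! ### Averages on a Banach space -/

variable [CompleteSpace E]

theorem commute_groupAvg (hW : IsIsomGroup W) {k : ℝ → ℂ} (hk : Integrable k) {B : E →L[ℂ] E}
    (hB : ∀ t, Commute B (W t)) : Commute B (groupAvg hW hk) := by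
  ext x
  rw [mul_apply_eq_comp, mul_apply_eq_comp, groupAvg_apply, groupAvg_apply,
    ← B.integral_comp_comm (hW.integrable hk x)]
  refine integral_congr_ae (ae_of_all _ fun t => ?_)
  simp only [map_smul]
  rw [← mul_apply_eq_comp, (hB t).eq, mul_apply_eq_comp]

/-- If the kernel `V` reproduces the dilate `k(·/m)` under convolution, then averaging against `V`
fixes every average of the sped-up group `W(m·)` against `k`. -/
theorem groupAvg_reproduce (hW : IsIsomGroup W) {k V : ℝ → ℂ} (hk : Integrable k)
    (hV : Integrable V) {m : ℝ} (hm : 0 < m)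
    (hkV : ∀ u, ∫ s, V s * k ((u - s) / m) = k (u / m)) (x : E) :
    groupAvg hW hV (groupAvg (hW.scale m) hk x) = groupAvg (hW.scale m) hk x := by
  set κ : ℝ → ℂ := fun u => (m⁻¹ : ℂ) * k (u / m) with hκ
  have hκi : Integrable κ := (hk.comp_div hm.ne').const_mul _
  have hκV : ∀ u, ∫ s, V s * κ (u - s) = κ u := by
    intro u
    simp only [hκ]
    rw [← hkV u, ← integral_const_mul]
    exact integral_congr_ae (ae_of_all _ fun s => by ring)
  rw [groupAvg_scale_apply hW hk hm, groupAvg_apply]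
  change ∫ s, V s • W s (∫ u, κ u • W u x) = ∫ u, κ u • W u x
  have hi : Integrable (Function.uncurry fun s u => (V s * κ (u - s)) • W u x)
      (volume.prod volume) := by
    have h1 : Integrable (fun z : ℝ × ℝ => V z.1 * κ (z.2 - z.1)) (volume.prod volume) :=
      (hV.convolution_integrand (ContinuousLinearMap.mul ℂ ℂ) hκi).swap
    refine h1.smul_bdd ‖x‖ (f := fun z : ℝ × ℝ => W z.2 x) ?_ ?_
    · exact ((hW.cont x).comp continuous_snd).aestronglyMeasurable
    · exact ae_of_all _ fun z => (hW.norm z.2 x).le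
  calc ∫ s, V s • W s (∫ u, κ u • W u x) = ∫ s, ∫ u, (V s * κ (u - s)) • W u x := by
        refine integral_congr_ae (ae_of_all _ fun s => ?_)
        simp only
        rw [← (W s).integral_comp_comm (hW.integrable hκi x), ← integral_smul,
          ← integral_add_right_eq_self (fun u => (V s * κ (u - s)) • W u x) s]
        refine integral_congr_ae (ae_of_all _ fun u => ?_)
        simp only [map_smul, add_sub_cancel_right, mul_smul]
        rw [add_comm u s, hW.add, mul_apply_eq_comp]
    _ = ∫ u, ∫ s, (V s * κ (u - s)) • W u x := integral_integral_swap hi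
    _ = ∫ u, κ u • W u x := by
        refine integral_congr_ae (ae_of_all _ fun u => ?_)
        simp only
        rw [integral_smul_const, hκV]

/-- Averages against a `C¹` kernel with integrable derivative lie in the domain of the generator,
and the generator acts on them by differentiating the kernel. -/
theorem genDeriv_groupAvg (hW : IsIsomGroup W) {V V' : ℝ → ℂ} (hV : Integrable V)
    (hV' : Integrable fun t => -V' t) (hd : ∀ t, HasDerivAt V (V' t) t) (hc : Continuous V')
    {C : ℝ} (hC : ∀ t, ‖V' t‖ ≤ C * (1 + t ^ 2)⁻¹) (x : E) :
    GenDeriv W (groupAvg hW hV x) (groupAvg hW hV' x) := by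
  have hVc : Continuous V := continuous_iff_continuousAt.2 fun t => (hd t).continuousAt
  have hC0 : 0 ≤ C := by simpa using (norm_nonneg _).trans (hC 0)
  have hshift : ∀ s, W s (groupAvg hW hV x) = ∫ t, V (t - s) • W t x := by
    intro s
    rw [groupAvg_apply, ← (W s).integral_comp_comm (hW.integrable hV x),
      ← integral_add_right_eq_self (fun t => V (t - s) • W t x) s]
    refine integral_congr_ae (ae_of_all _ fun t => ?_)
    simp only [map_smul, add_sub_cancel_right]
    rw [add_comm t s, hW.add, mul_apply_eq_comp]
  have main : HasDerivAt (fun s : ℝ => ∫ t, V (t - s) • W t x)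
      (∫ t, (-V' (t - 0)) • W t x) 0 := by
    refine (hasDerivAt_integral_of_dominated_loc_of_deriv_le
      (F := fun s t => V (t - s) • W t x) (F' := fun s t => (-V' (t - s)) • W t x)
      (bound := fun t => (3 * C * ‖x‖) * (1 + t ^ 2)⁻¹)
      (Metric.ball_mem_nhds (0 : ℝ) one_pos) ?_ ?_ ?_ ?_ ?_ ?_).2
    · refine Eventually.of_forall fun s => Continuous.aestronglyMeasurable ?_
      exact (hVc.comp (by fun_prop)).smul (hW.cont x)
    · simpa using hW.integrable hV x
    · refine Continuous.aestronglyMeasurable ?_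
      exact (hc.comp (by fun_prop)).neg.smul (hW.cont x)
    · refine ae_of_all _ fun t s hs => ?_
      rw [norm_smul, norm_neg, hW.norm]
      have hs1 : s ^ 2 ≤ 1 := by
        rw [mem_ball_zero_iff, Real.norm_eq_abs] at hs
        rw [← sq_abs]; exact pow_le_one₀ (abs_nonneg _) hs.le
      have h1 : (1 + (t - s) ^ 2)⁻¹ ≤ 3 * (1 + t ^ 2)⁻¹ := by
        rw [← div_eq_mul_inv, inv_eq_one_div, div_le_div_iff₀ (by positivity) (by positivity)]
        nlinarith [sq_nonneg (t - 2 * s)]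
      calc ‖V' (t - s)‖ * ‖x‖ ≤ (C * (3 * (1 + t ^ 2)⁻¹)) * ‖x‖ := by
            gcongr
            exact (hC _).trans (mul_le_mul_of_nonneg_left h1 hC0)
        _ = _ := by ring
    · exact integrable_inv_one_add_sq.const_mul _
    · refine ae_of_all _ fun t s _ => ?_
      have h1 : HasDerivAt (fun s : ℝ => V (t - s)) (-V' (t - s)) s := by
        simpa using (hd (t - s)).comp_const_sub t s
      exact h1.smul_const _
  rw [GenDeriv]
  have h := main.tendsto_slope_zero
  have h0 : groupAvg hW hV x = ∫ t, V (t - 0) • W t x := by simp [groupAvg_apply]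
  simp only [zero_add, sub_zero] at h
  refine (h.congr fun t => ?_)
  rw [hshift t]
  rfl

/-! ### Reproduction and error of the Jackson operator -/

theorem commute_jacksonOp (hW : IsIsomGroup W) {k : ℝ → ℂ} (hk : Integrable k) (r : ℕ)
    {B : E →L[ℂ] E} (hB : ∀ t, Commute B (W t)) : Commute B (jacksonOp hW hk r) :=
  Commute.sum_right _ _ _ fun _ _ => (commute_groupAvg _ hk fun _ => hB _).smul_right _

/-- The range of the Jackson operator lies in the fixed space of the average against `V`. -/
theorem jacksonOp_reproduce (hW : IsIsomGroup W) {k V : ℝ → ℂ} (hk : Integrable k)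
    (hV : Integrable V) (hkV : ∀ m : ℝ, 1 ≤ m → ∀ u, ∫ s, V s * k ((u - s) / m) = k (u / m))
    (r : ℕ) (x : E) : groupAvg hW hV (jacksonOp hW hk r x) = jacksonOp hW hk r x := by
  simp only [jacksonOp, sum_apply, map_sum, smul_apply,
    map_smul]
  refine Finset.sum_congr rfl fun i _ => ?_
  rw [groupAvg_reproduce hW hk hV (by positivity) (hkV _ (by linarith [Nat.cast_nonneg (α := ℝ) i]))]

theorem sub_jacksonOp_eq (hW : IsIsomGroup W) {k : ℝ → ℂ} (hk : Integrable k)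
    (hk1 : ∫ t, k t = 1) (r : ℕ) (x : E) :
    x - jacksonOp hW hk r x = ∫ t, k t • ((1 - W t) ^ r) x := by
  have hi : ∀ i : ℕ, Integrable fun t =>
      ((-1) ^ i * (r.choose (i + 1) : ℂ)) • (k t • W (((i : ℝ) + 1) * t) x) := fun i =>
    ((hW.scale ((i : ℝ) + 1)).integrable hk x).smul _
  simp only [diff_pow_eq hW, smul_sub, Finset.smul_sum, smul_comm (k _)]
  rw [integral_sub (hk.smul_const x) (integrable_finsetSum _ fun i _ => hi i),
    integral_smul_const, hk1, one_smul, integral_finsetSum _ fun i _ => hi i, jacksonOp,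
    sum_apply]
  simp only [integral_smul, smul_apply, groupAvg_apply]

/-- One-variable Jackson estimate: the error of the Jackson operator of the rescaled group
`t ↦ U(c t / σ)` is controlled by the `r`-th modulus of `U` itself at `s = σ⁻¹`. -/
theorem norm_sub_jacksonOp_le {U : ℝ → E →L[ℂ] E} (hU : IsIsomGroup U) {k : ℝ → ℂ}
    (hk : Integrable k) (hkN : ∀ N : ℕ, Integrable fun t => |t| ^ N * ‖k t‖)
    (hk1 : ∫ t, k t = 1) (r : ℕ) {c σ : ℝ} (hc : 0 < c) (hσ : 0 < σ) (x : E) :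
    ‖x - jacksonOp (hU.scale (c / σ)) hk r x‖ ≤
      (∫ t, ‖k t‖ * (1 + c * |t|) ^ r) * omegaMod U r σ⁻¹ x := by
  have hint : Integrable fun t => ‖k t‖ * (1 + c * |t|) ^ r := by
    have h : (fun t => ‖k t‖ * (1 + c * |t|) ^ r) = fun t => ∑ m ∈ Finset.range (r + 1),
        (c ^ (r - m) * r.choose m) * (|t| ^ (r - m) * ‖k t‖) := by
      funext t
      rw [add_pow, Finset.mul_sum]
      refine Finset.sum_congr rfl fun m _ => ?_
      rw [one_pow, mul_pow]; ring
    rw [h]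
    exact integrable_finsetSum _ fun m _ => (hkN _).const_mul _
  rw [sub_jacksonOp_eq _ hk hk1, ← integral_mul_const]
  refine norm_integral_le_of_norm_le (hint.mul_const _) (ae_of_all _ fun t => ?_)
  rw [norm_smul, mul_assoc]
  refine mul_le_mul_of_nonneg_left ?_ (norm_nonneg _)
  rw [norm_one_sub_pow fun t => U (c / σ * t)]
  refine (hU.norm_diff_le r (inv_pos.2 hσ) _ x).trans (le_of_eq ?_)
  congr 3
  rw [abs_mul, abs_of_pos (by positivity)]
  field_simp

/-! ### Jackson's inequality for commuting groups -/

/-- Jackson's inequality. The approximant of `f` is `J₁ ⋯ Jₙ f`, with `J_j` the Jackson operator of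
the group `U_j` rescaled so that the Bernstein inequality holds with constant `σ`; telescoping
the product reduces the error to the one-variable errors `‖f - J_j f‖`. -/
theorem jackson_inequality {n : ℕ} (U : Fin n → ℝ → E →L[ℂ] E) (hU : ∀ j, IsIsomGroup (U j))
    (hcomm : ∀ i j s t, Commute (U i s) (U j t)) (r : ℕ) :
    ∃ M : ℝ, 0 ≤ M ∧ ∀ σ : ℝ, 0 < σ → ∀ f : E,
      bestApproxMellin U σ f ≤ M * ∑ j, omegaMod (U j) r σ⁻¹ f := by
  obtain ⟨k, V, V', hk, hkN, hk1, hV, hd, hc', ⟨C, hC⟩, hkV⟩ := exists_kernels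
  have hV' : Integrable fun t => -V' t :=
    ((integrable_inv_one_add_sq.const_mul C).mono' hc'.aestronglyMeasurable
      (ae_of_all _ hC)).neg
  -- any `c` at least the norm of the derivative operator works in the Bernstein inequality
  set c : ℝ := (∫ t, ‖-V' t‖) + 1 with hc
  have hc0 : 0 < c := by
    have : 0 ≤ ∫ t, ‖-V' t‖ := integral_nonneg fun _ => norm_nonneg _
    linarith
  set K : ℝ := 1 + ∑ i ∈ Finset.range r, r.choose (i + 1) * ∫ t, ‖k t‖ with hK
  have hK1 : 1 ≤ K := by
    have : 0 ≤ ∑ i ∈ Finset.range r, r.choose (i + 1) * ∫ t, ‖k t‖ :=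
      Finset.sum_nonneg fun i _ => mul_nonneg (by positivity)
        (integral_nonneg fun _ => norm_nonneg _)
    linarith
  set M₁ : ℝ := ∫ t, ‖k t‖ * (1 + c * |t|) ^ r with hM₁
  have hM₁0 : 0 ≤ M₁ := integral_nonneg fun t => by positivity
  refine ⟨K ^ n * M₁, by positivity, fun σ hσ f => ?_⟩
  have hW : ∀ j, IsIsomGroup fun t => U j (c / σ * t) := fun j => (hU j).scale _
  let J : Fin n → E →L[ℂ] E := fun j => jacksonOp (hW j) hk r
  let P : Fin n → E →L[ℂ] E := fun j => groupAvg (hW j) hV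
  let D : Fin n → E →L[ℂ] E := fun j => groupAvg (hW j) hV'
  have hUJ : ∀ i j t, Commute (U i t) (J j) := fun i j t =>
    commute_jacksonOp _ hk r fun s => hcomm _ _ _ _
  have hUD : ∀ i j t, Commute (U i t) (D j) := fun i j t =>
    commute_groupAvg _ hV' fun s => hcomm _ _ _ _
  have hPJ : ∀ i j, Commute (J j) (P i) := fun i j =>
    commute_groupAvg _ hV fun t => (hUJ _ _ _).symm
  have hPD : ∀ i j, Commute (D j) (P i) := fun i j =>
    commute_groupAvg _ hV fun t => (hUD _ _ _).symm
  -- on the common fixed space of the `P j` every generator is bounded by `σ`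
  have bern : ∀ g : E, (∀ j, P j g = g) → memBernsteinMellin U σ g := by
    intro g hg L
    suffices ∃ h, IsIterDeriv U L g h ∧ ‖h‖ ≤ σ ^ L.length * ‖g‖ ∧ ∀ j, P j h = h by
      obtain ⟨h, h1, h2, -⟩ := this
      exact ⟨h, h1, h2⟩
    induction L with
    | nil => exact ⟨g, rfl, by simp, hg⟩
    | cons j L ih =>
      obtain ⟨h, h1, h2, h3⟩ := ih
      have hgen : GenDeriv (fun t => U j (c / σ * t)) h (D j h) := by
        have := genDeriv_groupAvg (hW j) hV hV' hd hc' hC h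
        have h4 : groupAvg (hW j) hV h = h := h3 j
        rwa [h4] at this
      refine ⟨_, ⟨h, h1, hgen.of_scale (by positivity)⟩, ?_, fun i => ?_⟩
      · have h5 : ‖D j h‖ ≤ c * ‖h‖ := by
          refine (groupAvg_norm_le (hW j) hV' h).trans ?_
          exact mul_le_mul_of_nonneg_right (by linarith) (norm_nonneg _)
        have h6 : ‖(((c / σ : ℝ) : ℂ)⁻¹)‖ = σ / c := by
          rw [norm_inv, Complex.norm_real, Real.norm_of_nonneg (by positivity), inv_div]
        rw [norm_smul, h6, List.length_cons, pow_succ]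
        calc σ / c * ‖D j h‖ ≤ σ / c * (c * ‖h‖) := by gcongr
          _ = σ * ‖h‖ := by field_simp
          _ ≤ σ * (σ ^ L.length * ‖g‖) := by gcongr
          _ = _ := by ring
      · rw [map_smul, ← mul_apply_eq_comp, ← (hPD i j).eq, mul_apply_eq_comp, h3]
  have approx : ∀ s : Finset (Fin n), ∃ g, (∀ j ∈ s, P j g = g) ∧
      ‖f - g‖ ≤ K ^ s.card * ∑ j ∈ s, ‖f - J j f‖ := by
    intro s
    induction s using Finset.induction_on with
    | empty => exact ⟨f, by simp, by simp⟩
    | insert a s ha ih =>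
      obtain ⟨g, hg, hfg⟩ := ih
      refine ⟨J a g, fun j hj => ?_, ?_⟩
      · rcases Finset.mem_insert.1 hj with rfl | hj
        · exact jacksonOp_reproduce (hW j) hk hV hkV r g
        · rw [← mul_apply_eq_comp, ← (hPJ j a).eq, mul_apply_eq_comp, hg j hj]
      · have h1 : ‖J a (f - g)‖ ≤ K * ‖f - g‖ := by
          refine (jacksonOp_norm_le (hW a) hk r _).trans ?_
          exact mul_le_mul_of_nonneg_right (by linarith) (norm_nonneg _)
        have h2 : f - J a g = (f - J a f) + J a (f - g) := by rw [map_sub]; abel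
        have h3 : 1 ≤ K ^ (s.card + 1) := one_le_pow₀ hK1
        rw [Finset.card_insert_of_notMem ha, Finset.sum_insert ha, h2, mul_add]
        refine (norm_add_le _ _).trans (add_le_add ?_ (h1.trans ?_))
        · exact le_mul_of_one_le_left (norm_nonneg _) h3
        · rw [pow_succ', mul_assoc]
          exact mul_le_mul_of_nonneg_left hfg (by linarith)
  obtain ⟨g, hg, hfg⟩ := approx Finset.univ
  have hbdd : BddBelow ((fun g => ‖f - g‖) '' {g | memBernsteinMellin U σ g}) :=
    ⟨0, by rintro _ ⟨y, -, rfl⟩; exact norm_nonneg _⟩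
  refine (csInf_le hbdd ⟨g, bern g fun j => hg j (Finset.mem_univ j), rfl⟩).trans (hfg.trans ?_)
  rw [Finset.card_univ, Fintype.card_fin, mul_assoc]
  refine mul_le_mul_of_nonneg_left ?_ (by positivity)
  rw [Finset.mul_sum]
  exact Finset.sum_le_sum fun j _ => norm_sub_jacksonOp_le (hU j) hk hkN hk1 r hc0 hσ f

end Abstract

/-! ### The Mellin translations in logarithmic coordinates -/

/-- The coordinatewise exponential `(y₁,…,yₙ) ↦ (e^{y₁},…,e^{yₙ})`. -/
def expMap (n : ℕ) (y : Fin n → ℝ) : Fin n → ℝ := fun i => Real.exp (y i)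

/-- The Jacobian `∏ e^{y_i}` of the coordinatewise exponential cancels the density `∏ x_i⁻¹`. -/
theorem expMap_measurePreserving (n : ℕ) :
    MeasurePreserving (expMap n) volume (mellinMeasure n) := by
  have hmeas : Measurable (expMap n) := by unfold expMap; fun_prop
  refine ⟨hmeas, ?_⟩
  have himg : expMap n '' Set.univ = {x | ∀ i, 0 < x i} := by
    ext x
    constructor
    · rintro ⟨y, -, rfl⟩ i
      exact Real.exp_pos _
    · intro hx
      exact ⟨fun i => Real.log (x i), trivial, funext fun i => Real.exp_log (hx i)⟩
  have hinj : Set.InjOn (expMap n) Set.univ := fun x _ y _ h =>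
    funext fun i => Real.exp_injective (congrFun h i)
  let f' : (Fin n → ℝ) → (Fin n → ℝ) →L[ℝ] (Fin n → ℝ) := fun y =>
    ContinuousLinearMap.pi fun i =>
      (Real.exp (y i) • ContinuousLinearMap.id ℝ ℝ) ∘SL ContinuousLinearMap.proj i
  have hf' : ∀ y ∈ Set.univ, HasFDerivWithinAt (expMap n) (f' y) Set.univ y := by
    intro y _
    refine HasFDerivAt.hasFDerivWithinAt (hasFDerivAt_pi.2 fun i => ?_)
    have := (hasFDerivAt_apply (𝕜 := ℝ) i y).exp
    exact this
  have hdet : ∀ y, (f' y).det = ∏ i, Real.exp (y i) := by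
    intro y
    rw [ContinuousLinearMap.det_pi]
    refine Finset.prod_congr rfl fun i _ => ?_
    simp [ContinuousLinearMap.det]
  ext s hs
  rw [Measure.map_apply hmeas hs, mellinMeasure, withDensity_apply _ hs, ← lintegral_indicator hs,
    ← himg, lintegral_image_eq_lintegral_abs_det_fderiv_mul volume MeasurableSet.univ hf' hinj,
    Measure.restrict_univ, ← lintegral_indicator_one (hmeas hs)]
  refine lintegral_congr fun y => ?_
  by_cases h : expMap n y ∈ s
  · rw [Set.indicator_of_mem (show y ∈ expMap n ⁻¹' s from h), Set.indicator_of_mem h, hdet,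
      abs_of_pos (Finset.prod_pos fun i _ => Real.exp_pos _),
      ENNReal.ofReal_prod_of_nonneg fun i _ => (Real.exp_pos _).le, ← Finset.prod_mul_distrib,
      eq_comm]
    refine Finset.prod_eq_one fun i _ => ?_
    rw [← ENNReal.ofReal_mul (Real.exp_pos _).le, expMap,
      mul_inv_cancel₀ (Real.exp_pos _).ne', ENNReal.ofReal_one]
  · rw [Set.indicator_of_notMem (show y ∉ expMap n ⁻¹' s from h), Set.indicator_of_notMem h,
      mul_zero]

/-- Translation `g ↦ g(· + v)` on `L^p(ℝⁿ)`. -/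
def lpTranslate {n : ℕ} (p : ℝ≥0∞) (v : Fin n → ℝ) (g : Lp ℂ p (volume : Measure (Fin n → ℝ))) :
    Lp ℂ p (volume : Measure (Fin n → ℝ)) :=
  Lp.compMeasurePreserving (fun y => y + v) (measurePreserving_add_right volume v) g

theorem lpTranslate_coe {n : ℕ} (p : ℝ≥0∞) (v : Fin n → ℝ)
    (g : Lp ℂ p (volume : Measure (Fin n → ℝ))) :
    lpTranslate p v g =ᵐ[volume] fun y => g (y + v) :=
  Lp.coeFn_compMeasurePreserving g (measurePreserving_add_right volume v)

theorem lpTranslate_lpTranslate {n : ℕ} (p : ℝ≥0∞) (v w : Fin n → ℝ)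
    (g : Lp ℂ p (volume : Measure (Fin n → ℝ))) :
    lpTranslate p v (lpTranslate p w g) = lpTranslate p (v + w) g := by
  refine Lp.ext ?_
  filter_upwards [lpTranslate_coe p v (lpTranslate p w g), lpTranslate_coe p (v + w) g,
    (measurePreserving_add_right volume v).quasiMeasurePreserving.ae (lpTranslate_coe p w g)]
    with y h1 h2 h3
  rw [h1, h2, h3, add_assoc]

theorem lpTranslate_zero {n : ℕ} (p : ℝ≥0∞) (g : Lp ℂ p (volume : Measure (Fin n → ℝ))) :
    lpTranslate p 0 g = g := by
  refine Lp.ext ?_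
  filter_upwards [lpTranslate_coe p 0 g] with y h1
  rw [h1, add_zero]

/-- The isometric embedding `f ↦ f ∘ exp` of the Mellin space into `L^p(ℝⁿ)`. -/
def logLp {n : ℕ} (p : ℝ≥0∞) (f : Lp ℂ p (mellinMeasure n)) :
    Lp ℂ p (volume : Measure (Fin n → ℝ)) :=
  Lp.compMeasurePreserving (expMap n) (expMap_measurePreserving n) f

theorem logLp_isometry {n : ℕ} (p : ℝ≥0∞) [Fact (1 ≤ p)] : Isometry (logLp (n := n) p) :=
  Lp.isometry_compMeasurePreserving (expMap_measurePreserving n)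

section Mellin

variable {n : ℕ} {p : ℝ≥0∞} [Fact (1 ≤ p)]
  {U : Fin n → ℝ → (Lp ℂ p (mellinMeasure n) →L[ℂ] Lp ℂ p (mellinMeasure n))}

/-- Logarithmic coordinates turn Mellin translations into translations along the axes. -/
theorem logLp_mellin (hU : IsMellinTranslation p U) (j : Fin n) (t : ℝ)
    (f : Lp ℂ p (mellinMeasure n)) :
    logLp p (U j t f) = lpTranslate p (Pi.single j t) (logLp p f) := by
  have hE := expMap_measurePreserving n
  have hco : ∀ g : Lp ℂ p (mellinMeasure n), logLp p g =ᵐ[volume] fun y => g (expMap n y) :=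
    fun g => Lp.coeFn_compMeasurePreserving g hE
  refine Lp.ext ?_
  filter_upwards [hco (U j t f), lpTranslate_coe p (Pi.single j t) (logLp p f),
    hE.quasiMeasurePreserving.ae (hU j t f),
    (measurePreserving_add_right volume (Pi.single j t)).quasiMeasurePreserving.ae (hco f)]
    with y h1 h2 h3 h4
  rw [h1, h2, h3, h4]
  congr 1
  funext i
  rcases eq_or_ne i j with rfl | h
  · simp [mellinDilate, expMap, Real.exp_add, mul_comm]
  · simp [mellinDilate, expMap, h]

theorem mellin_commute (hU : IsMellinTranslation p U) (i j : Fin n) (s t : ℝ) :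
    Commute (U i s) (U j t) := by
  ext1 f
  apply (logLp_isometry p).injective
  rw [mul_apply_eq_comp, mul_apply_eq_comp]
  simp only [logLp_mellin hU, lpTranslate_lpTranslate, add_comm]

theorem mellin_isIsomGroup (hp : p ≠ ∞) (hU : IsMellinTranslation p U) (j : Fin n) :
    IsIsomGroup (U j) where
  zero := by
    ext1 f
    apply (logLp_isometry p).injective
    rw [logLp_mellin hU, Pi.single_zero, lpTranslate_zero, one_apply_eq_self]
  add s t := by
    ext1 f
    apply (logLp_isometry p).injective
    rw [mul_apply_eq_comp]
    simp only [logLp_mellin hU, lpTranslate_lpTranslate, Pi.single_add]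
  norm t f := by
    have h : ∀ g : Lp ℂ p (mellinMeasure n), ‖logLp p g‖ = ‖g‖ := fun g =>
      Lp.norm_compMeasurePreserving g (expMap_measurePreserving n)
    rw [← h, logLp_mellin hU, ← h f]
    exact Lp.norm_compMeasurePreserving _ _
  -- this is where `p < ∞` enters: translations are not strongly continuous on `L^∞`
  cont f := by
    rw [(logLp_isometry p).isEmbedding.continuous_iff]
    simp only [Function.comp_def, logLp_mellin hU]
    let g : ℝ → C(Fin n → ℝ, Fin n → ℝ) := fun t => ⟨fun y => y + Pi.single j t, by fun_prop⟩
    have hg : Continuous g := by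
      refine ContinuousMap.continuous_of_continuous_uncurry _ ?_
      exact continuous_snd.add ((continuous_single j).comp continuous_fst)
    have hgm : ∀ t, MeasurePreserving (g t) volume volume := fun t =>
      measurePreserving_add_right volume (Pi.single j t : Fin n → ℝ)
    exact (continuous_const (y := logLp p f)).compMeasurePreservingLp hg hgm hp

end Mellin

/-! ### Comparison of the moduli and integration -/

theorem sum_rpow_le_rpow_sum {ι : Type*} (s : Finset ι) (x : ι → ℝ) (hx : ∀ i, 0 ≤ x i) {q : ℝ}
    (hq : 1 ≤ q) : ∑ i ∈ s, x i ^ q ≤ (∑ i ∈ s, x i) ^ q := by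
  classical
  induction s using Finset.induction_on with
  | empty => simp [Real.zero_rpow (by linarith : q ≠ 0)]
  | insert a s ha ih =>
    rw [Finset.sum_insert ha, Finset.sum_insert ha]
    exact (add_le_add le_rfl ih).trans
      (Real.add_rpow_le_rpow_add (hx a) (Finset.sum_nonneg fun i _ => hx i) hq)

section Mixed

variable {E : Type*} [NormedAddCommGroup E] [NormedSpace ℂ E] {n : ℕ} {U : Fin n → ℝ → E →L[ℂ] E}

theorem opNorm_list_prod_le (l : List (E →L[ℂ] E)) (hl : ∀ A ∈ l, ‖A‖ ≤ 2) :
    ‖l.prod‖ ≤ 2 ^ l.length := by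
  induction l with
  | nil => exact ContinuousLinearMap.norm_id_le.trans (by simp)
  | cons A l ih =>
    rw [List.prod_cons, List.length_cons, pow_succ']
    exact (norm_mul_le _ _).trans (mul_le_mul (hl A (by simp))
      (ih fun B hB => hl B (by simp [hB])) (norm_nonneg _) (by norm_num))

/-- The diagonal terms `J = (j,…,j)` of the mixed modulus dominate the partial moduli. -/
theorem sum_omegaMod_le_mixedMod (hU : ∀ j, IsIsomGroup (U j)) {r : ℕ} (hr : 0 < r) (s : ℝ)
    (f : E) : ∑ j, omegaMod (U j) r s f ≤ mixedMod U r s f := by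
  set Φ : (Fin r → Fin n) → ℝ := fun J =>
    sSup ((fun τ : Fin r → ℝ => ‖((List.ofFn fun i => U (J i) (τ i) - 1).prod) f‖) ''
      Set.univ.pi fun _ => Set.Icc 0 s) with hΦ
  have hΦ0 : ∀ J, 0 ≤ Φ J := fun J => Real.sSup_nonneg (by
    rintro _ ⟨τ, -, rfl⟩; exact norm_nonneg _)
  have hle : ∀ j, omegaMod (U j) r s f ≤ Φ fun _ => j := by
    intro j
    refine Real.sSup_le ?_ (hΦ0 _)
    rintro _ ⟨t, ht, rfl⟩
    refine le_csSup ⟨2 ^ r * ‖f‖, ?_⟩ ⟨fun _ => t, fun _ _ => ht, ?_⟩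
    · rintro _ ⟨τ, -, rfl⟩
      refine ContinuousLinearMap.le_of_opNorm_le _ ?_ f
      refine (opNorm_list_prod_le _ fun A hA => ?_).trans (by simp)
      obtain ⟨i, rfl⟩ := List.mem_ofFn.1 hA
      refine (norm_sub_le _ _).trans ?_
      have h1 : ‖(1 : E →L[ℂ] E)‖ ≤ 1 := ContinuousLinearMap.norm_id_le
      linarith [(hU j).opNorm_le (τ i)]
    · simp only [List.ofFn_const, List.prod_replicate]
  have hinj : Function.Injective fun (j : Fin n) (_ : Fin r) => j := fun a b h =>
    congrFun h ⟨0, hr⟩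
  calc ∑ j, omegaMod (U j) r s f ≤ ∑ j, Φ fun _ => j := Finset.sum_le_sum fun j _ => hle j
    _ = ∑ J ∈ Finset.univ.map ⟨_, hinj⟩, Φ J := by rw [Finset.sum_map]; rfl
    _ ≤ ∑ J, Φ J := Finset.sum_le_sum_of_subset_of_nonneg (Finset.subset_univ _)
        fun J _ _ => hΦ0 J

end Mixed

/-- The substitution `s = τ⁻¹`. -/
theorem lintegral_comp_inv_Ioi (g : ℝ → ℝ≥0∞) :
    ∫⁻ s in Set.Ioi (0 : ℝ), g s
      = ∫⁻ τ in Set.Ioi (0 : ℝ), ENNReal.ofReal ((τ ^ 2)⁻¹) * g τ⁻¹ := by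
  have himg : (fun τ : ℝ => τ⁻¹) '' Set.Ioi 0 = Set.Ioi 0 := by
    ext x
    constructor
    · rintro ⟨y, hy, rfl⟩
      exact inv_pos.2 (Set.mem_Ioi.1 hy)
    · intro hx
      exact ⟨x⁻¹, inv_pos.2 (Set.mem_Ioi.1 hx), inv_inv x⟩
  have h := lintegral_image_eq_lintegral_abs_deriv_mul (s := Set.Ioi (0 : ℝ))
    (f := fun τ : ℝ => τ⁻¹) (f' := fun τ => -(τ ^ 2)⁻¹) measurableSet_Ioi
    (fun x hx => (hasDerivAt_inv (ne_of_gt hx)).hasDerivWithinAt)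
    (fun a _ b _ hab => inv_injective hab) g
  rw [himg] at h
  rw [h]
  refine lintegral_congr fun τ => ?_
  rw [abs_neg, abs_of_nonneg (by positivity)]

/-- **Direct approximation theorem**: for `0 < α < r`,
`∫₀^∞ (τ^α E_p(τ,f))^q dτ/τ ≤ C Σ_j ∫₀^∞ (s^{-α} ω^r_{j,p}(s,f))^q ds/s
≤ C ∫₀^∞ (s^{-α} Ω^r_p(s,f))^q ds/s`; in particular the Besov–Mellin space `B^α_{p,q}`
embeds continuously into the approximation space `E_{α,q}(X^p, B)`. -/
theorem direct_approximation_mellin {n : ℕ} (p : ℝ≥0∞) [Fact (1 ≤ p)] (hp : p ≠ ∞)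
    (U : Fin n → ℝ → (Lp ℂ p (mellinMeasure n) →L[ℂ] Lp ℂ p (mellinMeasure n)))
    (hU : IsMellinTranslation p U)
    (r : ℕ) (α q : ℝ) (hq : 1 ≤ q) (hα : 0 < α) (hαr : α < (r : ℝ)) :
    ∃ C : ℝ, 0 < C ∧ ∀ f : Lp ℂ p (mellinMeasure n),
      (∫⁻ τ in Set.Ioi (0 : ℝ),
          ENNReal.ofReal ((τ ^ α * bestApproxMellin U τ f) ^ q / τ)) ≤
        ENNReal.ofReal C * ∑ j : Fin n,
          (∫⁻ s in Set.Ioi (0 : ℝ),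
            ENNReal.ofReal ((s ^ (-α) * omegaMod (U j) r s f) ^ q / s)) ∧
      (∑ j : Fin n, ∫⁻ s in Set.Ioi (0 : ℝ),
          ENNReal.ofReal ((s ^ (-α) * omegaMod (U j) r s f) ^ q / s)) ≤
        ∫⁻ s in Set.Ioi (0 : ℝ),
          ENNReal.ofReal ((s ^ (-α) * mixedMod U r s f) ^ q / s) := by
  have hG : ∀ j, IsIsomGroup (U j) := mellin_isIsomGroup hp hU
  have hq0 : 0 ≤ q := by linarith
  have hr : 0 < r := by
    have : (0 : ℝ) < r := hα.trans hαr
    exact_mod_cast this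
  obtain ⟨M, hM, hJ⟩ := jackson_inequality U hG (mellin_commute hU) r
  set C : ℝ := M ^ q * (n : ℝ) ^ (q - 1) + 1 with hC
  have hCnn : 0 ≤ M ^ q * (n : ℝ) ^ (q - 1) := by positivity
  refine ⟨C, by positivity, fun f => ?_⟩
  have hmeas : ∀ j, Measurable fun s => omegaMod (U j) r s f := fun j =>
    ((hG j).omegaMod_mono r f).measurable
  have hGm : ∀ j, Measurable fun s : ℝ =>
      ENNReal.ofReal ((s ^ (-α) * omegaMod (U j) r s f) ^ q / s) := fun j =>
    ((((measurable_id.pow_const (-α)).mul (hmeas j)).pow_const q).div measurable_id).ennreal_ofReal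
  have hω0 : ∀ j s, 0 ≤ omegaMod (U j) r s f := fun j s => omegaMod_nonneg _ _ _ _
  rw [← lintegral_finsetSum _ fun j _ => hGm j]
  constructor
  · rw [← lintegral_const_mul' _ _ ENNReal.ofReal_ne_top, lintegral_comp_inv_Ioi (fun s => _ * _)]
    refine setLIntegral_mono_ae' measurableSet_Ioi (ae_of_all _ fun τ hτ => ?_)
    have hτ0 : (0 : ℝ) < τ := hτ
    have hE0 : 0 ≤ bestApproxMellin U τ f := Real.sInf_nonneg (by
      rintro _ ⟨g, -, rfl⟩; exact norm_nonneg _)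
    have hx0 : ∀ j, 0 ≤ τ ^ α * omegaMod (U j) r τ⁻¹ f := fun j =>
      mul_nonneg (by positivity) (hω0 j _)
    have hterm : ∀ j, 0 ≤ (τ⁻¹ ^ (-α) * omegaMod (U j) r τ⁻¹ f) ^ q / τ⁻¹ := fun j =>
      div_nonneg (Real.rpow_nonneg (mul_nonneg (by positivity) (hω0 j _)) _) (by positivity)
    have hinv : τ⁻¹ ^ (-α) = τ ^ α := by
      rw [Real.rpow_neg (by positivity), Real.inv_rpow hτ0.le, inv_inv]
    rw [← ENNReal.ofReal_sum_of_nonneg fun j _ => hterm j, ← ENNReal.ofReal_mul (by positivity),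
      ← ENNReal.ofReal_mul (by positivity)]
    refine ENNReal.ofReal_le_ofReal ?_
    simp only [hinv]
    have h1 : (τ ^ α * bestApproxMellin U τ f) ^ q
        ≤ C * ∑ j, (τ ^ α * omegaMod (U j) r τ⁻¹ f) ^ q := by
      calc (τ ^ α * bestApproxMellin U τ f) ^ q
          ≤ (M * ∑ j, τ ^ α * omegaMod (U j) r τ⁻¹ f) ^ q := by
            refine Real.rpow_le_rpow (by positivity) ?_ hq0
            rw [← Finset.mul_sum, mul_left_comm]
            exact mul_le_mul_of_nonneg_left (hJ τ hτ0 f) (by positivity)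
        _ = M ^ q * (∑ j, τ ^ α * omegaMod (U j) r τ⁻¹ f) ^ q :=
            Real.mul_rpow hM (Finset.sum_nonneg fun j _ => hx0 j)
        _ ≤ M ^ q * ((n : ℝ) ^ (q - 1) * ∑ j, (τ ^ α * omegaMod (U j) r τ⁻¹ f) ^ q) := by
            refine mul_le_mul_of_nonneg_left ?_ (by positivity)
            simpa using Real.rpow_sum_le_const_mul_sum_rpow_of_nonneg Finset.univ hq
              fun j _ => hx0 j
        _ ≤ C * ∑ j, (τ ^ α * omegaMod (U j) r τ⁻¹ f) ^ q := by
            rw [← mul_assoc]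
            refine mul_le_mul_of_nonneg_right (by linarith)
              (Finset.sum_nonneg fun j _ => Real.rpow_nonneg (hx0 j) q)
    rw [← Finset.sum_div, div_inv_eq_mul]
    calc _ ≤ (C * ∑ j, (τ ^ α * omegaMod (U j) r τ⁻¹ f) ^ q) / τ := by gcongr
      _ = _ := by field_simp
  · refine setLIntegral_mono_ae' measurableSet_Ioi (ae_of_all _ fun s hs => ?_)
    have hs0 : (0 : ℝ) < s := hs
    have hx0 : ∀ j, 0 ≤ s ^ (-α) * omegaMod (U j) r s f := fun j =>
      mul_nonneg (by positivity) (hω0 j _)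
    rw [← ENNReal.ofReal_sum_of_nonneg fun j _ =>
      div_nonneg (Real.rpow_nonneg (hx0 j) q) hs0.le, ← Finset.sum_div]
    refine ENNReal.ofReal_le_ofReal (div_le_div_of_nonneg_right ?_ hs0.le)
    refine (sum_rpow_le_rpow_sum Finset.univ _ hx0 hq).trans ?_
    refine Real.rpow_le_rpow (Finset.sum_nonneg fun j _ => hx0 j) ?_ hq0
    rw [← Finset.mul_sum]
    exact mul_le_mul_of_nonneg_left (sum_omegaMod_le_mixedMod hG hr s f) (by positivity)
end
end

section
/- (Inverse approximation theorem) Let 1 ≤ p < ∞, 1 ≤ q < ∞, r ∈ ℕ and 0 < α < r. There exists a constant C > 0 such that for every f ∈ X^p: ‖f‖_{X^p} + (∫₀^∞ (s^{−α} Ω^r_p(s, f))^q ds/s)^{1/q} ≤ C ( ‖f‖_{X^p} + (∫₀^∞ (τ^α E_p(τ, f))^q dτ/τ)^{1/q} ); in particular the approximation space E_{α,q}(X^p, B), B = ∪_{σ>0} B^p_σ(Θ₁,…,Θₙ), is continuously embedded in the Besov–Mellin space B^α_{p,q}. -/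
/-!
The Mellin translations are pairwise commuting one-parameter groups of isometries, because the
dilations preserve the Haar measure (`measurePreserving_mellinDilate`). Everything else is an
argument about such a family on a Banach space, followed by a one-dimensional Hardy inequality.

The Bernstein–Mellin classes are not obviously closed under subtraction, since their definition
compares `‖Θ ⋯ Θ g‖` with `‖g‖` itself. They are therefore replaced by the condition `ExpType`, in
which `‖g‖` is relaxed to an arbitrary constant `M`. This condition is linear and preserved by the
operators `U_j(τ) - I`. Bernstein's inequality `bernstein_one` recovers `‖Θ_j h‖ ≤ e σ ‖h‖` from
it: the orbit `t ↦ U_j(t) h` extends to an entire function of exponential type `σ` bounded by `‖h‖`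
on the real line, the Phragmén–Lindelöf principle bounds it by `‖h‖ e^{σ |Im z|}`, and Cauchy's
estimate on the circle of radius `1/σ` gives the claim. Consequently a mixed difference of order
`r` with steps at most `s` has norm at most `(e s σ)^r ‖h‖` on vectors of exponential type `σ`
(`ExpType.norm_mixedDiff_le`).

For fixed `s`, near-best approximants `gₘ` of type `2^{-m}/s` and the telescoping series
`f = (f - g₀) + ∑ₘ (gₘ - gₘ₊₁)` then give `Ω^r(s, f) ≤ K ∑ₘ 2^{-mr} E(2^{-m}/s, f)`
(`mixedMod_le_dyadicSum`). The remainder `g_N` contributes `O(2^{-Nr} ‖f‖)`, which tends to zero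
as `r ≥ 1`. Multiplying by `s^{-α}` turns the series into
`∑ₘ 2^{-m(r-α)} τₘ^α E(τₘ, f)` with `τₘ = 2^{-m}/s`; since `ds/s` is invariant under
`s ↦ 2^{-m}/s`, each term has the same weighted `L^q` norm and the geometric series converges
(`hardy_dyadic`).
-/

open MeasureTheory Filter Topology ENNReal

noncomputable section

/-! ### Isometry groups and their generators -/

section Groups

variable {E : Type*} [NormedAddCommGroup E] [NormedSpace ℂ E]

/-- A one-parameter group of isometries; strong continuity is not part of the definition. -/
structure IsIsomGroup_s17 (T : ℝ → E →L[ℂ] E) : Prop where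
  zero : T 0 = 1
  add : ∀ s t, T (s + t) = T s * T t
  norm : ∀ t f, ‖T t f‖ = ‖f‖

/-- A pairwise commuting family of one-parameter isometry groups. -/
structure IsCommFamily {n : ℕ} (U : Fin n → ℝ → E →L[ℂ] E) : Prop where
  grp : ∀ j, IsIsomGroup_s17 (U j)
  comm : ∀ i j s t, Commute (U i s) (U j t)

lemma GenDeriv.unique {T : ℝ → E →L[ℂ] E} {f g g' : E} (h : GenDeriv T f g)
    (h' : GenDeriv T f g') : g = g' :=
  tendsto_nhds_unique h h'

lemma GenDeriv.map {T : ℝ → E →L[ℂ] E} {f g : E} (h : GenDeriv T f g) (A : E →L[ℂ] E)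
    (hA : ∀ t, Commute A (T t)) : GenDeriv T (A f) (A g) := by
  have := (A.continuous.tendsto g).comp h
  refine this.congr fun t => ?_
  have hc : A (T t f) = T t (A f) := congrArg (fun B : E →L[ℂ] E => B f) (hA t).eq
  have hs : A (t⁻¹ • (T t f - f)) = t⁻¹ • A (T t f - f) := A.map_smul_of_tower _ _
  simp only [Function.comp_apply, hs, map_sub, hc]

lemma GenDeriv.sub {T : ℝ → E →L[ℂ] E} {f g f' g' : E} (h : GenDeriv T f g)
    (h' : GenDeriv T f' g') : GenDeriv T (f - f') (g - g') := by
  refine (Tendsto.sub h h').congr fun t => ?_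
  rw [← smul_sub, map_sub]
  congr 1
  abel

/-- The generator relation at `0` propagates along the whole orbit by the group law. -/
lemma GenDeriv.hasDerivAt {T : ℝ → E →L[ℂ] E} (hT : IsIsomGroup_s17 T) {f g : E}
    (h : GenDeriv T f g) (x : ℝ) : HasDerivAt (fun t => T t f) (T x g) x := by
  rw [hasDerivAt_iff_tendsto_slope_zero]
  refine (((T x).continuous.tendsto g).comp h).congr fun t => ?_
  have hs : T x (t⁻¹ • (T t f - f)) = t⁻¹ • T x (T t f - f) := (T x).map_smul_of_tower _ _
  simp only [Function.comp_apply, hs, map_sub, hT.add x t, mul_apply_eq_comp]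

lemma GenDeriv.norm_sub_le {T : ℝ → E →L[ℂ] E} (hT : IsIsomGroup_s17 T) {f g : E}
    (h : GenDeriv T f g) (t : ℝ) : ‖T t f - f‖ ≤ |t| * ‖g‖ := by
  have := Convex.norm_image_sub_le_of_norm_hasDerivWithin_le (f := fun t => T t f)
    (f' := fun x => T x g) (s := Set.univ) (x := (0 : ℝ)) (y := t) (C := ‖g‖)
    (fun x _ => (h.hasDerivAt hT x).hasDerivWithinAt) (fun x _ => (hT.norm x g).le)
    convex_univ trivial trivial
  simpa [hT.zero, mul_comm] using this

lemma hasDerivAt_taylor (a : ℕ → E) (n : ℕ) (x : ℝ) :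
    HasDerivAt (fun t : ℝ => ∑ k ∈ Finset.range (n + 1), (t ^ k / k.factorial) • a k)
      (∑ k ∈ Finset.range n, (x ^ k / k.factorial) • a (k + 1)) x := by
  simp_rw [Finset.sum_range_succ' _ n]
  simp only [pow_zero, Nat.factorial_zero, Nat.cast_one, div_one, one_smul]
  refine HasDerivAt.add_const _ (HasDerivAt.fun_sum fun k _ => ?_)
  have h1 : HasDerivAt (fun t : ℝ => t ^ (k + 1) / ((k + 1).factorial : ℝ))
      (x ^ k / k.factorial) x := by
    refine ((hasDerivAt_pow (k + 1) x).div_const ((k + 1).factorial : ℝ)).congr_deriv ?_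
    rw [Nat.factorial_succ]
    have : (k.factorial : ℝ) ≠ 0 := by positivity
    push_cast
    field_simp
  exact h1.smul_const _

/-- Taylor's formula for the orbit of a vector all of whose iterated generators are controlled. The
offset `k₀` lets the induction on the order pass to the shifted sequence `k ↦ a (k + 1)`. -/
lemma taylor_bound {T : ℝ → E →L[ℂ] E} (hT : IsIsomGroup_s17 T) {M σ : ℝ} (n : ℕ) :
    ∀ (k₀ : ℕ) (a : ℕ → E), (∀ k, GenDeriv T (a k) (a (k + 1))) →
      (∀ k, ‖a k‖ ≤ M * σ ^ (k₀ + k)) → ∀ t : ℝ, 0 ≤ t →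
      ‖T t (a 0) - ∑ k ∈ Finset.range n, (t ^ k / k.factorial) • a k‖
        ≤ M * σ ^ (k₀ + n) * (t ^ n / n.factorial) := by
  induction n with
  | zero =>
    intro k₀ a _ hb t _
    simpa [hT.norm] using hb 0
  | succ n ih =>
    intro k₀ a ha hb t ht
    have hd : ∀ x, HasDerivAt
        (fun t : ℝ => T t (a 0) - ∑ k ∈ Finset.range (n + 1), (t ^ k / k.factorial) • a k)
        (T x (a 1) - ∑ k ∈ Finset.range n, (x ^ k / k.factorial) • a (k + 1)) x := fun x =>
      ((ha 0).hasDerivAt hT x).sub (hasDerivAt_taylor a n x)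
    have hB : ∀ x : ℝ, HasDerivAt
        (fun t : ℝ => M * σ ^ (k₀ + (n + 1)) * (t ^ (n + 1) / (n + 1).factorial))
        (M * σ ^ (k₀ + (n + 1)) * (x ^ n / n.factorial)) x := by
      intro x
      refine HasDerivAt.const_mul _ ?_
      refine ((hasDerivAt_pow (n + 1) x).div_const ((n + 1).factorial : ℝ)).congr_deriv ?_
      rw [Nat.factorial_succ]
      have : (n.factorial : ℝ) ≠ 0 := by positivity
      push_cast
      field_simp
    refine image_norm_le_of_norm_deriv_right_le_deriv_boundary (a := 0) (b := t)
      (fun x _ => (hd x).continuousAt.continuousWithinAt)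
      (fun x _ => (hd x).hasDerivWithinAt) ?_ hB ?_ ⟨ht, le_rfl⟩
    · simp [hT.zero, Finset.sum_range_succ']
    · intro x hx
      have := ih (k₀ + 1) (fun k => a (k + 1)) (fun k => ha (k + 1))
        (fun k => by have := hb (k + 1); rwa [show k₀ + 1 + k = k₀ + (k + 1) by ring]) x hx.1
      rwa [show k₀ + 1 + n = k₀ + (n + 1) by ring] at this

/-- The orbit of a vector whose iterated generators grow at most geometrically is the sum of its
Taylor series at positive times. -/
lemma tendsto_taylor_orbit {T : ℝ → E →L[ℂ] E} (hT : IsIsomGroup_s17 T) {M σ : ℝ} {a : ℕ → E}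
    (ha : ∀ k, GenDeriv T (a k) (a (k + 1))) (hb : ∀ k, ‖a k‖ ≤ M * σ ^ k) {t : ℝ}
    (ht : 0 ≤ t) :
    Tendsto (fun n => ∑ k ∈ Finset.range n, (t ^ k / k.factorial) • a k) atTop
      (𝓝 (T t (a 0))) := by
  rw [tendsto_iff_norm_sub_tendsto_zero]
  have h0 : Tendsto (fun n : ℕ => M * ((σ * t) ^ n / n.factorial)) atTop (𝓝 0) := by
    simpa using (FloorSemiring.tendsto_pow_div_factorial_atTop (σ * t)).const_mul M
  refine squeeze_zero (fun _ => norm_nonneg _) (fun n => ?_) h0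
  rw [norm_sub_rev]
  refine (taylor_bound hT n 0 a ha (by simpa using hb) t ht).trans (le_of_eq ?_)
  rw [zero_add, mul_pow]
  ring

lemma IsIsomGroup_s17.neg {T : ℝ → E →L[ℂ] E} (hT : IsIsomGroup_s17 T) :
    IsIsomGroup_s17 fun t => T (-t) where
  zero := by simpa using hT.zero
  add s t := by rw [neg_add, hT.add]
  norm t f := hT.norm _ f

/-- Reversing time changes the sign of the generator; the scalar `c` makes the statement usable
along a sequence of iterated generators. -/
lemma GenDeriv.neg {T : ℝ → E →L[ℂ] E} {f g : E} (h : GenDeriv T f g) (c : ℝ) :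
    GenDeriv (fun t => T (-t)) (c • f) ((-c) • g) := by
  have h1 : Tendsto (fun t : ℝ => -t) (𝓝[≠] (0 : ℝ)) (𝓝[≠] (0 : ℝ)) := by
    refine tendsto_nhdsWithin_iff.2 ⟨?_, ?_⟩
    · simpa using (continuous_neg.tendsto (0 : ℝ)).mono_left (nhdsWithin_le_nhds (s := {0}ᶜ))
    · filter_upwards [self_mem_nhdsWithin] with t ht
      simpa using ht
  refine ((h.comp h1).const_smul (-c)).congr fun t => ?_
  have hs : T (-t) (c • f) = c • T (-t) f := (T (-t)).map_smul_of_tower _ _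
  simp only [Function.comp_apply, hs, ← smul_sub, smul_smul]
  congr 1
  rw [inv_neg]
  ring

/-! ### Bernstein's inequality -/

/-- A Phragmén–Lindelöf bound: an entire function of exponential type `σ` bounded by `C` on the
real line is bounded by `C e^{σ Im z}` in the upper half-plane. -/
lemma norm_le_of_expType {F : ℂ → E} {M σ C : ℝ} (hF : Differentiable ℂ F) (hσ : 0 < σ)
    (hexp : ∀ z, ‖F z‖ ≤ M * Real.exp (σ * ‖z‖)) (hreal : ∀ x : ℝ, ‖F x‖ ≤ C)
    {z : ℂ} (hz : 0 ≤ z.im) : ‖F z‖ ≤ C * Real.exp (σ * z.im) := by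
  -- The rotation `w ↦ i w` sends the right half-plane to the upper one, and the factor `e^{-σ w}`
  -- compensates the growth along the positive imaginary axis.
  let G : ℂ → E := fun w => Complex.exp (-(σ * w)) • F (Complex.I * w)
  have hnorm : ∀ w, ‖G w‖ = Real.exp (-(σ * w.re)) * ‖F (Complex.I * w)‖ := by
    intro w
    simp [G, norm_smul, Complex.norm_exp]
  have hG : Differentiable ℂ G := by
    have h1 : Differentiable ℂ fun w : ℂ => F (Complex.I * w) :=
      hF.comp (differentiable_id.const_mul Complex.I)
    have h2 : Differentiable ℂ fun w : ℂ => Complex.exp (-(σ * w)) := by fun_prop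
    exact h2.smul h1
  have key := PhragmenLindelof.right_half_plane_of_bounded_on_real (C := C) (f := G)
    (z := -Complex.I * z) hG.diffContOnCl ⟨1, by norm_num, σ, ?_⟩ ?_ ?_ (by simpa using hz)
  · rw [hnorm] at key
    have e1 : Complex.I * (-Complex.I * z) = z := by
      rw [← mul_assoc]; simp
    rw [e1] at key
    have e2 : (-Complex.I * z).re = z.im := by simp
    rw [e2, Real.exp_neg, inv_mul_le_iff₀ (Real.exp_pos _)] at key
    linarith
  · refine Asymptotics.IsBigO.of_bound M ?_
    refine Filter.eventually_inf_principal.2 (Filter.Eventually.of_forall fun w hw => ?_)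
    have hw' : 0 < w.re := hw
    rw [hnorm, Real.norm_of_nonneg (Real.exp_pos _).le]
    have h1 : Real.exp (-(σ * w.re)) ≤ 1 := Real.exp_le_one_iff.2 (by nlinarith)
    have h2 := hexp (Complex.I * w)
    simp only [norm_mul, Complex.norm_I, one_mul] at h2
    rw [Real.rpow_one]
    calc _ ≤ 1 * ‖F (Complex.I * w)‖ := by gcongr
      _ ≤ _ := by simpa using h2
  · refine Filter.isBoundedUnder_of_eventually_le (a := M) ?_
    filter_upwards [Filter.eventually_ge_atTop (0 : ℝ)] with x hx
    rw [hnorm]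
    have h2 := hexp (Complex.I * x)
    simp only [norm_mul, Complex.norm_I, one_mul, Complex.norm_real, Real.norm_of_nonneg hx] at h2
    rw [Complex.ofReal_re, Real.exp_neg, inv_mul_le_iff₀ (Real.exp_pos _)]
    linarith
  · intro x
    rw [hnorm]
    have e : Complex.I * (x * Complex.I) = ((-x : ℝ) : ℂ) := by
      rw [mul_comm, mul_assoc, Complex.I_mul_I]; simp
    rw [e]
    simpa using hreal (-x)

/-- Cauchy's estimate on the circle of radius `1/σ`, together with `norm_le_of_expType` in both
half-planes, bounds the derivative at the origin by the supremum on the real line. -/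
lemma norm_deriv_le_of_expType {F : ℂ → E} {M σ C : ℝ} (hF : Differentiable ℂ F) (hσ : 0 < σ)
    (hexp : ∀ z, ‖F z‖ ≤ M * Real.exp (σ * ‖z‖)) (hreal : ∀ x : ℝ, ‖F x‖ ≤ C) :
    ‖deriv F 0‖ ≤ Real.exp 1 * σ * C := by
  have hC : 0 ≤ C := (norm_nonneg _).trans (hreal 0)
  have hsph : ∀ z ∈ Metric.sphere (0 : ℂ) σ⁻¹, ‖F z‖ ≤ C * Real.exp 1 := by
    intro z hz
    have hz' : ‖z‖ = σ⁻¹ := by simpa using hz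
    have him : σ * |z.im| ≤ 1 := by
      have := Complex.abs_im_le_norm z
      rw [hz'] at this
      calc σ * |z.im| ≤ σ * σ⁻¹ := by gcongr
        _ = 1 := mul_inv_cancel₀ hσ.ne'
    have main : ‖F z‖ ≤ C * Real.exp (σ * |z.im|) := by
      rcases le_total 0 z.im with h | h
      · rw [abs_of_nonneg h]
        exact norm_le_of_expType hF hσ hexp hreal h
      · rw [abs_of_nonpos h]
        have := norm_le_of_expType (F := fun w => F (-w)) (M := M) (C := C) (z := -z)
          (hF.comp differentiable_neg) hσ (fun w => by simpa using hexp (-w))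
          (fun x => by simpa using hreal (-x)) (by simpa using h)
        simpa using this
    refine main.trans ?_
    gcongr
  have := Complex.norm_deriv_le_of_forall_mem_sphere_norm_le (inv_pos.2 hσ)
    hF.diffContOnCl hsph
  refine this.trans (le_of_eq ?_)
  rw [div_inv_eq_mul]
  ring

/-- Bernstein's inequality, up to the constant `e`: along a sequence of iterated generators with
geometric growth of ratio `σ`, the first generator is bounded by `e σ` times the norm, whatever
the growth constant `M`. -/
lemma bernstein_one [CompleteSpace E] {T : ℝ → E →L[ℂ] E} (hT : IsIsomGroup_s17 T) {M σ : ℝ}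
    (hσ : 0 < σ) {a : ℕ → E} (ha : ∀ k, GenDeriv T (a k) (a (k + 1)))
    (hb : ∀ k, ‖a k‖ ≤ M * σ ^ k) : ‖a 1‖ ≤ Real.exp 1 * σ * ‖a 0‖ := by
  have hM : 0 ≤ M := (norm_nonneg _).trans (by simpa using hb 0)
  -- the entire extension of the orbit `t ↦ T t (a 0)`
  let c : ℕ → ℂ → E := fun k z => (z ^ k / k.factorial) • a k
  let F : ℂ → E := fun z => ∑' k, c k z
  have hc : ∀ k z, ‖c k z‖ ≤ M * ((σ * ‖z‖) ^ k / k.factorial) := by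
    intro k z
    have : ‖c k z‖ = ‖z‖ ^ k / k.factorial * ‖a k‖ := by simp [c, norm_smul]
    rw [this]
    calc ‖z‖ ^ k / k.factorial * ‖a k‖ ≤ ‖z‖ ^ k / k.factorial * (M * σ ^ k) := by
          gcongr; exact hb k
      _ = _ := by rw [mul_pow]; ring
  have hsum : ∀ x : ℝ, Summable fun k : ℕ => M * (x ^ k / k.factorial) := fun x =>
    (Real.summable_pow_div_factorial x).mul_left M
  have hF : Differentiable ℂ F := by
    intro z
    have hd : DifferentiableOn ℂ F (Metric.ball 0 (‖z‖ + 1)) := by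
      refine Complex.differentiableOn_tsum_of_summable_norm (hsum (σ * (‖z‖ + 1))) (fun k => ?_)
        Metric.isOpen_ball fun k w hw => ?_
      · have : Differentiable ℂ (c k) :=
          ((differentiable_id.pow k).div_const _).smul_const _
        exact this.differentiableOn
      · have hw' : ‖w‖ ≤ ‖z‖ + 1 := by simpa using (mem_ball_zero_iff.1 hw).le
        refine (hc k w).trans ?_
        gcongr
    exact hd.differentiableAt (Metric.isOpen_ball.mem_nhds (by simp))
  have hexp : ∀ z, ‖F z‖ ≤ M * Real.exp (σ * ‖z‖) := by
    intro z
    refine tsum_of_norm_bounded ?_ fun k => hc k z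
    have := NormedSpace.expSeries_div_hasSum_exp (σ * ‖z‖)
    rw [← Real.exp_eq_exp_ℝ] at this
    exact this.mul_left M
  have hlim : ∀ z, Tendsto (fun n => ∑ k ∈ Finset.range n, c k z) atTop (𝓝 (F z)) := fun z =>
    (Summable.of_norm_bounded (hsum _) fun k => hc k z).hasSum.tendsto_sum_nat
  have hcr : ∀ (t : ℝ) k, c k t = (t ^ k / k.factorial) • a k := by
    intro t k
    rw [← Complex.coe_smul]
    simp [c]
  have hFpos : ∀ t : ℝ, 0 ≤ t → F t = T t (a 0) := by
    intro t ht
    refine tendsto_nhds_unique (hlim t) ?_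
    simp_rw [hcr]
    exact tendsto_taylor_orbit hT ha hb ht
  have hFneg : ∀ t : ℝ, 0 ≤ t → F (-t : ℝ) = T (-t) (a 0) := by
    intro t ht
    refine tendsto_nhds_unique (hlim _) ?_
    have h1 : ∀ k, GenDeriv (fun t => T (-t)) ((-1 : ℝ) ^ k • a k)
        ((-1 : ℝ) ^ (k + 1) • a (k + 1)) := by
      intro k
      have := (ha k).neg ((-1 : ℝ) ^ k)
      rwa [show -(-1 : ℝ) ^ k = (-1 : ℝ) ^ (k + 1) by rw [pow_succ]; ring] at this
    have := tendsto_taylor_orbit hT.neg (a := fun k => (-1 : ℝ) ^ k • a k) h1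
      (fun k => by simpa [norm_smul] using hb k) ht
    simp only [pow_zero, one_smul] at this
    refine this.congr fun n => Finset.sum_congr rfl fun k _ => ?_
    rw [hcr, smul_smul]
    congr 1
    rw [neg_pow t]
    ring
  have hFT : ∀ t : ℝ, F t = T t (a 0) := by
    intro t
    rcases le_total 0 t with h | h
    · exact hFpos t h
    · simpa using hFneg (-t) (by linarith)
  have hderiv : deriv F 0 = a 1 := by
    have h1 : HasDerivAt (fun t : ℝ => F t) (deriv F 0) 0 := by
      have h2 : HasDerivAt F (deriv F 0) ((0 : ℝ) : ℂ) := by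
        simpa using (hF 0).hasDerivAt
      have := h2.scomp (𝕜 := ℝ) (0 : ℝ) (Complex.ofRealCLM.hasDerivAt (x := (0 : ℝ)))
      simpa [Function.comp_def] using this
    have h3 := (ha 0).hasDerivAt hT 0
    simp_rw [hFT] at h1
    simpa [hT.zero] using h1.unique h3
  rw [← hderiv]
  refine norm_deriv_le_of_expType hF hσ hexp fun x => ?_
  rw [hFT, hT.norm]

/-! ### Mixed differences of vectors of exponential type -/

lemma IsIterDeriv.unique {n : ℕ} {U : Fin n → ℝ → E →L[ℂ] E} :
    ∀ {L : List (Fin n)} {f g g' : E}, IsIterDeriv U L f g → IsIterDeriv U L f g' → g = g'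
  | [], _, _, _, h, h' => Eq.trans h h'.symm
  | _ :: _, _, _, _, ⟨_, h₁, h₂⟩, ⟨_, h₁', h₂'⟩ => by
    obtain rfl := IsIterDeriv.unique h₁ h₁'
    exact h₂.unique h₂'

lemma IsIterDeriv.map {n : ℕ} {U : Fin n → ℝ → E →L[ℂ] E} (A : E →L[ℂ] E)
    (hA : ∀ j t, Commute A (U j t)) :
    ∀ {L : List (Fin n)} {f g : E}, IsIterDeriv U L f g → IsIterDeriv U L (A f) (A g)
  | [], _, _, h => congrArg A h
  | j :: _, _, _, ⟨h, h₁, h₂⟩ => ⟨A h, IsIterDeriv.map A hA h₁, h₂.map A (hA j)⟩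

lemma IsIterDeriv.sub {n : ℕ} {U : Fin n → ℝ → E →L[ℂ] E} :
    ∀ {L : List (Fin n)} {f g f' g' : E}, IsIterDeriv U L f g → IsIterDeriv U L f' g' →
      IsIterDeriv U L (f - f') (g - g')
  | [], _, _, _, _, h, h' => congrArg₂ (· - ·) h h'
  | _ :: _, _, _, _, _, ⟨h, h₁, h₂⟩, ⟨h', h₁', h₂'⟩ => ⟨h - h', h₁.sub h₁', h₂.sub h₂'⟩

lemma IsIterDeriv.zero {n : ℕ} (U : Fin n → ℝ → E →L[ℂ] E) :
    ∀ L : List (Fin n), IsIterDeriv U L 0 0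
  | [] => rfl
  | _ :: L => ⟨0, IsIterDeriv.zero U L, by simp [GenDeriv]⟩

/-- All iterated generators of `h` exist and those of order `k` are bounded by `M σ ^ k`. Unlike
`memBernsteinMellin`, where `M = ‖h‖`, this condition with unspecified `M` is visibly linear
in `h`. -/
def ExpType {n : ℕ} (U : Fin n → ℝ → E →L[ℂ] E) (M σ : ℝ) (h : E) : Prop :=
  ∀ L : List (Fin n), ∃ h', IsIterDeriv U L h h' ∧ ‖h'‖ ≤ M * σ ^ L.length

lemma memBernsteinMellin.expType {n : ℕ} {U : Fin n → ℝ → E →L[ℂ] E} {σ : ℝ} {g : E}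
    (h : memBernsteinMellin U σ g) : ExpType U ‖g‖ σ g := fun L => by
  obtain ⟨h', h₁, h₂⟩ := h L
  exact ⟨h', h₁, by rwa [mul_comm]⟩

lemma memBernsteinMellin.mono {n : ℕ} {U : Fin n → ℝ → E →L[ℂ] E} {σ σ' : ℝ} {g : E}
    (h : memBernsteinMellin U σ g) (h0 : 0 ≤ σ) (hσ : σ ≤ σ') : memBernsteinMellin U σ' g :=
  fun L => by
    obtain ⟨h', h₁, h₂⟩ := h L
    exact ⟨h', h₁, h₂.trans (by gcongr)⟩

lemma ExpType.sub {n : ℕ} {U : Fin n → ℝ → E →L[ℂ] E} {σ M M' : ℝ} {f g : E}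
    (hf : ExpType U M σ f) (hg : ExpType U M' σ g) : ExpType U (M + M') σ (f - g) := fun L => by
  obtain ⟨f', f₁, f₂⟩ := hf L
  obtain ⟨g', g₁, g₂⟩ := hg L
  refine ⟨f' - g', f₁.sub g₁, ?_⟩
  rw [add_mul]
  exact (_root_.norm_sub_le _ _).trans (add_le_add f₂ g₂)

lemma norm_diff_le {T : ℝ → E →L[ℂ] E} (hT : IsIsomGroup_s17 T) (t : ℝ) (f : E) :
    ‖(T t - 1) f‖ ≤ 2 * ‖f‖ := by
  have := _root_.norm_sub_le (T t f) f
  rw [hT.norm] at this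
  simpa [two_mul] using this

lemma ExpType.diff {n : ℕ} {U : Fin n → ℝ → E →L[ℂ] E} (hU : IsCommFamily U) {σ M : ℝ} {f : E}
    (hf : ExpType U M σ f) (j : Fin n) (t : ℝ) : ExpType U (2 * M) σ ((U j t - 1) f) :=
  fun L => by
    obtain ⟨f', f₁, f₂⟩ := hf L
    refine ⟨(U j t - 1) f', f₁.map _ fun i s => (hU.comm j i t s).sub_left (.one_left _), ?_⟩
    refine (norm_diff_le (hU.grp j) t f').trans ?_
    rw [mul_assoc]
    gcongr

lemma ExpType.norm_diff_le [CompleteSpace E] {n : ℕ} {U : Fin n → ℝ → E →L[ℂ] E}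
    (hU : IsCommFamily U) {σ M : ℝ} (hσ : 0 < σ) {f : E} (hf : ExpType U M σ f) (j : Fin n)
    (t : ℝ) : ‖(U j t - 1) f‖ ≤ |t| * (Real.exp 1 * σ * ‖f‖) := by
  choose a ha hb using fun k : ℕ => hf (List.replicate k j)
  have h0 : a 0 = f := ha 0
  have hstep : ∀ k, GenDeriv (U j) (a k) (a (k + 1)) := by
    intro k
    obtain ⟨h, h₁, h₂⟩ := ha (k + 1)
    rwa [IsIterDeriv.unique h₁ (ha k)] at h₂
  have hB := bernstein_one (hU.grp j) hσ hstep (M := M) fun k => by simpa using hb k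
  have h1 := (hstep 0).norm_sub_le (hU.grp j) t
  rw [zero_add] at h1
  rw [h0] at h1 hB
  simpa using h1.trans (by gcongr)

lemma norm_mixedDiff_le {n : ℕ} {U : Fin n → ℝ → E →L[ℂ] E} (hU : IsCommFamily U) (f : E) :
    ∀ (r : ℕ) (J : Fin r → Fin n) (τ : Fin r → ℝ),
      ‖((List.ofFn fun i => U (J i) (τ i) - 1).prod) f‖ ≤ 2 ^ r * ‖f‖ := by
  intro r
  induction r with
  | zero => intro J τ; simp
  | succ r ih =>
    intro J τ
    rw [List.ofFn_succ, List.prod_cons, mul_apply_eq_comp, pow_succ', mul_assoc]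
    refine (norm_diff_le (hU.grp _) _ _).trans ?_
    gcongr
    exact ih (fun i => J i.succ) fun i => τ i.succ

/-- Each difference with step at most `s` contributes a factor `e s σ` on vectors of exponential
type `σ`, because differences preserve the exponential type. -/
lemma ExpType.norm_mixedDiff_le [CompleteSpace E] {n : ℕ} {U : Fin n → ℝ → E →L[ℂ] E}
    (hU : IsCommFamily U) {σ M s : ℝ} (hσ : 0 < σ) {f : E} (hf : ExpType U M σ f) :
    ∀ (r : ℕ) (J : Fin r → Fin n) (τ : Fin r → ℝ), (∀ i, |τ i| ≤ s) →
      (∃ M', ExpType U M' σ (((List.ofFn fun i => U (J i) (τ i) - 1).prod) f)) ∧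
      ‖((List.ofFn fun i => U (J i) (τ i) - 1).prod) f‖
        ≤ (Real.exp 1 * (s * σ)) ^ r * ‖f‖ := by
  intro r
  induction r with
  | zero => intro J τ _; exact ⟨⟨M, by simpa using hf⟩, by simp⟩
  | succ r ih =>
    intro J τ hτ
    obtain ⟨⟨M', h₁⟩, h₂⟩ := ih (fun i => J i.succ) (fun i => τ i.succ) fun i => hτ _
    have hs : 0 ≤ s := (abs_nonneg _).trans (hτ 0)
    rw [List.ofFn_succ, List.prod_cons, mul_apply_eq_comp]
    refine ⟨⟨_, h₁.diff hU _ _⟩, (h₁.norm_diff_le hU hσ _ _).trans ?_⟩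
    calc _ ≤ s * (Real.exp 1 * σ * ((Real.exp 1 * (s * σ)) ^ r * ‖f‖)) := by
          gcongr; exact hτ 0
      _ = _ := by ring

/-! ### Estimate of the modulus by best approximations -/

lemma bestApprox_bddBelow {n : ℕ} (U : Fin n → ℝ → E →L[ℂ] E) (σ : ℝ) (f : E) :
    BddBelow ((fun g => ‖f - g‖) '' {g | memBernsteinMellin U σ g}) :=
  ⟨0, by rintro _ ⟨g, _, rfl⟩; exact norm_nonneg _⟩

lemma zero_memBernsteinMellin {n : ℕ} (U : Fin n → ℝ → E →L[ℂ] E) (σ : ℝ) :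
    memBernsteinMellin U σ 0 := fun L => ⟨0, IsIterDeriv.zero U L, by simp⟩

lemma bestApprox_nonneg {n : ℕ} (U : Fin n → ℝ → E →L[ℂ] E) (σ : ℝ) (f : E) :
    0 ≤ bestApproxMellin U σ f :=
  Real.sInf_nonneg (by rintro _ ⟨g, _, rfl⟩; exact norm_nonneg _)

lemma bestApprox_le_norm {n : ℕ} (U : Fin n → ℝ → E →L[ℂ] E) (σ : ℝ) (f : E) :
    bestApproxMellin U σ f ≤ ‖f‖ :=
  csInf_le (bestApprox_bddBelow U σ f) ⟨0, zero_memBernsteinMellin U σ, by simp⟩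

lemma bestApprox_antitoneOn {n : ℕ} (U : Fin n → ℝ → E →L[ℂ] E) (f : E) :
    AntitoneOn (fun σ => bestApproxMellin U σ f) (Set.Ioi 0) := by
  intro σ hσ σ' _ h
  exact csInf_le_csInf (bestApprox_bddBelow U σ' f) ⟨_, 0, zero_memBernsteinMellin U σ, rfl⟩
    (Set.image_mono fun g hg => memBernsteinMellin.mono hg (le_of_lt hσ) h)

lemma exists_approx {n : ℕ} (U : Fin n → ℝ → E →L[ℂ] E) (σ : ℝ) (f : E) {ε : ℝ} (hε : 0 < ε) :
    ∃ g, memBernsteinMellin U σ g ∧ ‖f - g‖ < bestApproxMellin U σ f + ε := by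
  obtain ⟨_, ⟨g, hg, rfl⟩, h⟩ := exists_lt_of_csInf_lt
    (s := (fun g => ‖f - g‖) '' {g | memBernsteinMellin U σ g})
    ⟨_, 0, zero_memBernsteinMellin U σ, rfl⟩ (lt_add_of_pos_right _ hε)
  exact ⟨g, hg, h⟩

/-- The series `∑ₘ 2^{-mr} E(2^{-m}/s, f)` bounding the modulus of continuity at `s`. -/
def dyadicSum {n : ℕ} (U : Fin n → ℝ → E →L[ℂ] E) (r : ℕ) (s : ℝ) (f : E) : ℝ :=
  ∑' m : ℕ, ((1 / 2 : ℝ) ^ r) ^ m * bestApproxMellin U ((1 / 2) ^ m / s) f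

lemma summable_dyadic {n : ℕ} (U : Fin n → ℝ → E →L[ℂ] E) {r : ℕ} (hr : r ≠ 0) (s : ℝ) (f : E) :
    Summable fun m : ℕ => ((1 / 2 : ℝ) ^ r) ^ m * bestApproxMellin U ((1 / 2) ^ m / s) f := by
  have hlt : ((1 / 2 : ℝ) ^ r) < 1 := pow_lt_one₀ (by norm_num) (by norm_num) hr
  refine Summable.of_nonneg_of_le (fun m => mul_nonneg (by positivity) (bestApprox_nonneg _ _ _))
    (fun m => ?_) ((summable_geometric_of_lt_one (by positivity) hlt).mul_right ‖f‖)
  gcongr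
  exact bestApprox_le_norm _ _ _

/-- Telescoping `f = (f - g₀) + ∑ₘ (gₘ - gₘ₊₁) + g_N` along near-best approximants `gₘ` of
exponential type `2^{-m}/s`. -/
lemma norm_mixedDiff_le_telescope [CompleteSpace E] {n : ℕ} {U : Fin n → ℝ → E →L[ℂ] E}
    (hU : IsCommFamily U) {r : ℕ} {s : ℝ} (hs : 0 < s) (f : E) (J : Fin r → Fin n)
    (τ : Fin r → ℝ) (hτ : ∀ i, |τ i| ≤ s) {ε : ℝ} (hε : 0 < ε) (N : ℕ) :
    ‖((List.ofFn fun i => U (J i) (τ i) - 1).prod) f‖ ≤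
      2 * (2 * Real.exp 1) ^ r * (∑ m ∈ Finset.range (N + 1),
        ((1 / 2 : ℝ) ^ r) ^ m * (bestApproxMellin U ((1 / 2) ^ m / s) f + ε)) +
      Real.exp 1 ^ r * (((1 / 2 : ℝ) ^ r) ^ N * (2 * ‖f‖ + ε)) := by
  set P := (List.ofFn fun i => U (J i) (τ i) - 1).prod with hP
  let σ : ℕ → ℝ := fun m => (1 / 2) ^ m / s
  have hσ : ∀ m, 0 < σ m := fun m => by positivity
  let e : ℕ → ℝ := fun m => bestApproxMellin U (σ m) f
  change _ ≤ 2 * (2 * Real.exp 1) ^ r * (∑ m ∈ Finset.range (N + 1),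
    ((1 / 2 : ℝ) ^ r) ^ m * (e m + ε)) + _
  have he : ∀ m, 0 ≤ e m := fun m => bestApprox_nonneg _ _ _
  choose g hg hfg using fun m => exists_approx U (σ m) f hε
  have hmono : ∀ m, σ (m + 1) ≤ σ m := fun m => by
    simp only [σ, pow_succ]
    gcongr
    have : (0 : ℝ) < (1 / 2) ^ m := by positivity
    linarith
  have hanti : ∀ m, e m ≤ e (m + 1) := fun m =>
    bestApprox_antitoneOn U f (hσ (m + 1)) (hσ m) (hmono m)
  have hsσ : ∀ m, (Real.exp 1 * (s * σ m)) ^ r = Real.exp 1 ^ r * ((1 / 2 : ℝ) ^ r) ^ m := by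
    intro m
    have : s * σ m = (1 / 2) ^ m := by simp only [σ]; field_simp
    rw [this, mul_pow, pow_right_comm]
  have hlow : ‖P (g N)‖ ≤ Real.exp 1 ^ r * (((1 / 2 : ℝ) ^ r) ^ N * (2 * ‖f‖ + ε)) := by
    have h1 := ((hg N).expType.norm_mixedDiff_le hU (hσ N) r J τ hτ).2
    rw [hsσ, mul_assoc] at h1
    refine h1.trans ?_
    gcongr
    have h2 : ‖g N‖ ≤ ‖f‖ + ‖f - g N‖ := by
      simpa using _root_.norm_sub_le f (f - g N)
    have h3 := bestApprox_le_norm U (σ N) f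
    linarith [hfg N]
  have hmid : ∀ m, ‖P (g m - g (m + 1))‖ ≤
      2 * (2 * Real.exp 1) ^ r * (((1 / 2 : ℝ) ^ r) ^ (m + 1) * (e (m + 1) + ε)) := by
    intro m
    have hE : ExpType U _ (σ m) (g m - g (m + 1)) :=
      (hg m).expType.sub ((hg (m + 1)).mono (hσ _).le (hmono m)).expType
    have h1 := (hE.norm_mixedDiff_le hU (hσ m) r J τ hτ).2
    rw [hsσ, mul_assoc] at h1
    have h2 : ‖g m - g (m + 1)‖ ≤ 2 * (e (m + 1) + ε) := by
      have : g m - g (m + 1) = (f - g (m + 1)) - (f - g m) := by abel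
      rw [this]
      refine (_root_.norm_sub_le _ _).trans ?_
      have := hfg m
      have := hfg (m + 1)
      have := hanti m
      simp only [e] at *
      linarith
    refine h1.trans ?_
    calc Real.exp 1 ^ r * (((1 / 2 : ℝ) ^ r) ^ m * ‖g m - g (m + 1)‖)
        ≤ Real.exp 1 ^ r * (((1 / 2 : ℝ) ^ r) ^ m * (2 * (e (m + 1) + ε))) := by gcongr
      _ = _ := by
        have : (2 : ℝ) ^ r * (1 / 2) ^ r = 1 := by rw [← mul_pow]; norm_num
        rw [pow_succ ((1 / 2 : ℝ) ^ r), mul_pow]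
        linear_combination (-(Real.exp 1 ^ r * (((1 / 2 : ℝ) ^ r) ^ m * (2 * (e (m + 1) + ε))))) *
          this
  have htop : ‖P (f - g 0)‖ ≤ 2 * (2 * Real.exp 1) ^ r * (((1 / 2 : ℝ) ^ r) ^ 0 * (e 0 + ε)) := by
    refine (norm_mixedDiff_le hU _ r J τ).trans ?_
    have h1 : (2 : ℝ) ^ r ≤ 2 * (2 * Real.exp 1) ^ r := by
      have h2 : (2 : ℝ) ^ r ≤ (2 * Real.exp 1) ^ r := by
        gcongr
        have := Real.add_one_le_exp 1
        linarith
      have : (0 : ℝ) ≤ (2 * Real.exp 1) ^ r := by positivity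
      linarith
    rw [pow_zero, one_mul]
    exact mul_le_mul h1 (hfg 0).le (norm_nonneg _) (by positivity)
  have hind : ∀ N, ‖P (f - g N)‖ ≤ 2 * (2 * Real.exp 1) ^ r *
      ∑ m ∈ Finset.range (N + 1), ((1 / 2 : ℝ) ^ r) ^ m * (e m + ε) := by
    intro N
    induction N with
    | zero => simpa using htop
    | succ N ih =>
      have : f - g (N + 1) = (f - g N) + (g N - g (N + 1)) := by abel
      rw [this, map_add, Finset.sum_range_succ, mul_add]
      exact (norm_add_le _ _).trans (add_le_add ih (hmid N))
  have : f = (f - g N) + g N := by abel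
  calc ‖P f‖ = ‖P (f - g N) + P (g N)‖ := by rw [← map_add, sub_add_cancel]
    _ ≤ _ := (norm_add_le _ _).trans (add_le_add (hind N) hlow)

lemma norm_mixedDiff_le_dyadicSum [CompleteSpace E] {n : ℕ} {U : Fin n → ℝ → E →L[ℂ] E}
    (hU : IsCommFamily U) {r : ℕ} (hr : r ≠ 0) {s : ℝ} (hs : 0 < s) (f : E) (J : Fin r → Fin n)
    (τ : Fin r → ℝ) (hτ : ∀ i, |τ i| ≤ s) :
    ‖((List.ofFn fun i => U (J i) (τ i) - 1).prod) f‖ ≤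
      2 * (2 * Real.exp 1) ^ r * dyadicSum U r s f := by
  have hlt : ((1 / 2 : ℝ) ^ r) < 1 := pow_lt_one₀ (by norm_num) (by norm_num) hr
  -- first `ε → 0` for fixed `N`, then `N → ∞`
  have h1 : ∀ N : ℕ, ‖((List.ofFn fun i => U (J i) (τ i) - 1).prod) f‖ ≤
      2 * (2 * Real.exp 1) ^ r * (∑ m ∈ Finset.range (N + 1),
        ((1 / 2 : ℝ) ^ r) ^ m * bestApproxMellin U ((1 / 2) ^ m / s) f) +
      Real.exp 1 ^ r * (((1 / 2 : ℝ) ^ r) ^ N * (2 * ‖f‖)) := by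
    intro N
    have hc : Continuous fun ε : ℝ => 2 * (2 * Real.exp 1) ^ r * (∑ m ∈ Finset.range (N + 1),
        ((1 / 2 : ℝ) ^ r) ^ m * (bestApproxMellin U ((1 / 2) ^ m / s) f + ε)) +
      Real.exp 1 ^ r * (((1 / 2 : ℝ) ^ r) ^ N * (2 * ‖f‖ + ε)) := by fun_prop
    have ht := (hc.tendsto 0).mono_left (nhdsWithin_le_nhds (s := Set.Ioi 0))
    simp only [add_zero] at ht
    refine ge_of_tendsto ht ?_
    filter_upwards [self_mem_nhdsWithin] with ε hε
    exact norm_mixedDiff_le_telescope hU hs f J τ hτ hε N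
  have h2 : Tendsto (fun N : ℕ => 2 * (2 * Real.exp 1) ^ r * (∑ m ∈ Finset.range (N + 1),
        ((1 / 2 : ℝ) ^ r) ^ m * bestApproxMellin U ((1 / 2) ^ m / s) f) +
      Real.exp 1 ^ r * (((1 / 2 : ℝ) ^ r) ^ N * (2 * ‖f‖))) atTop
      (𝓝 (2 * (2 * Real.exp 1) ^ r * dyadicSum U r s f +
        Real.exp 1 ^ r * (0 * (2 * ‖f‖)))) := by
    refine Tendsto.add (Tendsto.const_mul _ ?_) (Tendsto.const_mul _ (Tendsto.mul_const _ ?_))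
    · exact (summable_dyadic U hr s f).hasSum.tendsto_sum_nat.comp (tendsto_add_atTop_nat 1)
    · exact tendsto_pow_atTop_nhds_zero_of_lt_one (by positivity) hlt
  simpa using ge_of_tendsto' h2 h1

lemma mixedMod_nonneg {n : ℕ} (U : Fin n → ℝ → E →L[ℂ] E) (r : ℕ) (s : ℝ) (f : E) :
    0 ≤ mixedMod U r s f :=
  Finset.sum_nonneg fun _ _ => Real.sSup_nonneg (by rintro _ ⟨τ, _, rfl⟩; exact norm_nonneg _)

lemma mixedMod_le_dyadicSum [CompleteSpace E] {n : ℕ} {U : Fin n → ℝ → E →L[ℂ] E}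
    (hU : IsCommFamily U) {r : ℕ} (hr : r ≠ 0) {s : ℝ} (hs : 0 < s) (f : E) :
    mixedMod U r s f ≤ n ^ r * (2 * (2 * Real.exp 1) ^ r) * dyadicSum U r s f := by
  have h0 : 0 ≤ dyadicSum U r s f :=
    tsum_nonneg fun m => mul_nonneg (by positivity) (bestApprox_nonneg _ _ _)
  refine (Finset.sum_le_card_nsmul _ _ (2 * (2 * Real.exp 1) ^ r * dyadicSum U r s f)
    fun J _ => ?_).trans (le_of_eq ?_)
  · refine Real.sSup_le ?_ (by positivity)
    rintro _ ⟨τ, hτ, rfl⟩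
    refine norm_mixedDiff_le_dyadicSum hU hr hs f J τ fun i => ?_
    have := hτ i trivial
    rw [abs_of_nonneg this.1]
    exact this.2
  · simp [mul_assoc]

end Groups

/-! ### A discrete Hardy inequality -/

/-- Jensen's inequality for the convex power `x ↦ x ^ q` and a weighted series. -/
lemma tsum_weight_rpow_le {q : ℝ} (hq : 1 ≤ q) (w x : ℕ → ℝ≥0∞) :
    (∑' m, w m * x m) ^ q ≤ (∑' m, w m) ^ (q - 1) * ∑' m, w m * x m ^ q := by
  have hq0 : 0 < q := by linarith
  have hq1 : 0 ≤ 1 - q⁻¹ := by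
    have := inv_le_one_of_one_le₀ hq
    linarith
  have h1 : ∑' m, w m * x m ≤
      (∑' m, w m) ^ (1 - q⁻¹) * (∑' m, w m * x m ^ q) ^ q⁻¹ := by
    rw [ENNReal.tsum_eq_iSup_sum]
    refine iSup_le fun t => (ENNReal.inner_le_weight_mul_Lp_of_nonneg t hq w x).trans ?_
    gcongr
    · exact ENNReal.sum_le_tsum t
    · exact ENNReal.sum_le_tsum t
  calc _ ≤ ((∑' m, w m) ^ (1 - q⁻¹) * (∑' m, w m * x m ^ q) ^ q⁻¹) ^ q := by gcongr
    _ = _ := by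
      rw [ENNReal.mul_rpow_of_nonneg _ _ hq0.le, ← ENNReal.rpow_mul, ← ENNReal.rpow_mul,
        inv_mul_cancel₀ hq0.ne', ENNReal.rpow_one]
      congr 2
      field_simp

/-- Invariance of `ds/s` under the inversion `s ↦ b/s`. -/
lemma lintegral_inv_scale (ψ : ℝ → ℝ) {b : ℝ} (hb : 0 < b) :
    ∫⁻ s in Set.Ioi (0 : ℝ), ENNReal.ofReal (ψ (b / s) / s) =
      ∫⁻ τ in Set.Ioi (0 : ℝ), ENNReal.ofReal (ψ τ / τ) := by
  have himg : (fun s : ℝ => b / s) '' Set.Ioi 0 = Set.Ioi 0 := by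
    ext y
    constructor
    · rintro ⟨s, hs, rfl⟩
      exact div_pos hb hs
    · intro hy
      refine ⟨b / y, div_pos hb hy, ?_⟩
      have : y ≠ 0 := ne_of_gt hy
      simp only
      field_simp
  have hinj : Set.InjOn (fun s : ℝ => b / s) (Set.Ioi 0) := by
    intro x hx y hy h
    have hx' : x ≠ 0 := ne_of_gt hx
    have hy' : y ≠ 0 := ne_of_gt hy
    simp only at h
    field_simp at h
    exact h.symm
  have hder : ∀ s ∈ Set.Ioi (0 : ℝ),
      HasDerivWithinAt (fun s : ℝ => b / s) (-b / s ^ 2) (Set.Ioi 0) s := by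
    intro s hs
    have := (hasDerivAt_inv (ne_of_gt hs)).const_mul b
    refine (this.congr_deriv ?_).hasDerivWithinAt
    ring
  have key := lintegral_image_eq_lintegral_abs_deriv_mul measurableSet_Ioi hder hinj
    fun τ => ENNReal.ofReal (ψ τ / τ)
  rw [himg] at key
  rw [key]
  refine setLIntegral_congr_fun measurableSet_Ioi fun s hs => ?_
  have hs' : (0 : ℝ) < s := hs
  rw [← ENNReal.ofReal_mul (abs_nonneg _), abs_div, abs_neg, abs_of_pos hb,
    abs_of_pos (pow_pos hs' 2)]
  congr 1
  field_simp

/-- If `ω(s) ≤ K ∑ₘ 2^{-mr} φ(2^{-m}/s)`, then `s^{-α} ω(s)` is bounded by `K` times a geometric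
series of ratio `2^{-(r-α)}` whose terms are inversions of `τ^α φ(τ)`; its `L^q(ds/s)` norm is
therefore bounded by that of `τ^α φ(τ)`. -/
lemma hardy_dyadic {φ ω : ℝ → ℝ} (hφ : ∀ τ, 0 ≤ φ τ) (hanti : AntitoneOn φ (Set.Ioi 0))
    {r : ℕ} {α q K : ℝ} (hq : 1 ≤ q) (hαr : α < r) (hK : 0 ≤ K)
    (hω : ∀ s, 0 ≤ ω s)
    (hsum : ∀ s, Summable fun m : ℕ => ((1 / 2 : ℝ) ^ r) ^ m * φ ((1 / 2) ^ m / s))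
    (hle : ∀ s, 0 < s → ω s ≤ K * ∑' m : ℕ, ((1 / 2 : ℝ) ^ r) ^ m * φ ((1 / 2) ^ m / s)) :
    (∫⁻ s in Set.Ioi (0 : ℝ), ENNReal.ofReal ((s ^ (-α) * ω s) ^ q / s)) ^ (1 / q) ≤
      ENNReal.ofReal (K * (1 - (1 / 2 : ℝ) ^ ((r : ℝ) - α))⁻¹) *
        (∫⁻ τ in Set.Ioi (0 : ℝ), ENNReal.ofReal ((τ ^ α * φ τ) ^ q / τ)) ^ (1 / q) := by
  have hq0 : 0 < q := by linarith
  set c : ℝ := (1 / 2 : ℝ) ^ ((r : ℝ) - α) with hc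
  have hc0 : 0 < c := by positivity
  have hc1 : c < 1 := Real.rpow_lt_one (by norm_num) (by norm_num) (by linarith)
  let w : ℕ → ℝ≥0∞ := fun m => ENNReal.ofReal (c ^ m)
  let ψ : ℝ → ℝ := fun τ => τ ^ α * φ τ
  let x : ℕ → ℝ → ℝ≥0∞ := fun m s => ENNReal.ofReal (ψ ((1 / 2) ^ m / s))
  have hψ : ∀ τ, 0 < τ → 0 ≤ ψ τ := fun τ hτ => mul_nonneg (by positivity) (hφ τ)
  set I := ∫⁻ τ in Set.Ioi (0 : ℝ), ENNReal.ofReal ((τ ^ α * φ τ) ^ q / τ) with hI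
  have hW : ∑' m, w m = ENNReal.ofReal (1 - c)⁻¹ := by
    rw [← tsum_geometric_of_lt_one hc0.le hc1]
    exact (ENNReal.ofReal_tsum_of_nonneg (fun m => by positivity)
      (summable_geometric_of_lt_one hc0.le hc1)).symm
  have hsplit : ∀ s, 0 < s → ∀ m : ℕ,
      s ^ (-α) * (((1 / 2 : ℝ) ^ r) ^ m * φ ((1 / 2) ^ m / s)) =
        c ^ m * ψ ((1 / 2) ^ m / s) := by
    intro s hs m
    have e1 : ((1 / 2 : ℝ) ^ m / s) ^ α = ((1 / 2 : ℝ) ^ m) ^ α * s ^ (-α) := by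
      rw [Real.div_rpow (by positivity) hs.le, Real.rpow_neg hs.le, div_eq_mul_inv]
    have e2 : c ^ m * ((1 / 2 : ℝ) ^ m) ^ α = ((1 / 2 : ℝ) ^ r) ^ m := by
      rw [hc, Real.rpow_pow_comm (by norm_num), ← Real.rpow_add (by positivity),
        sub_add_cancel, Real.rpow_natCast, pow_right_comm]
    simp only [ψ]
    rw [e1, ← e2]
    ring
  have hpt : ∀ s ∈ Set.Ioi (0 : ℝ), ENNReal.ofReal ((s ^ (-α) * ω s) ^ q / s) ≤
      ENNReal.ofReal K ^ q * (ENNReal.ofReal (1 - c)⁻¹ ^ (q - 1) *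
        ∑' m, w m * ENNReal.ofReal (ψ ((1 / 2) ^ m / s) ^ q / s)) := by
    intro s hs
    have hs' : (0 : ℝ) < s := hs
    have h1 : ENNReal.ofReal (s ^ (-α) * ω s) ≤ ENNReal.ofReal K * ∑' m, w m * x m s := by
      have h2 : s ^ (-α) * ω s ≤ K * ∑' m, c ^ m * ψ ((1 / 2) ^ m / s) := by
        calc _ ≤ s ^ (-α) *
              (K * ∑' m : ℕ, ((1 / 2 : ℝ) ^ r) ^ m * φ ((1 / 2) ^ m / s)) := by
              gcongr; exact hle s hs'
          _ = K * ∑' m : ℕ, s ^ (-α) * (((1 / 2 : ℝ) ^ r) ^ m * φ ((1 / 2) ^ m / s)) := by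
              rw [tsum_mul_left]; ring
          _ = _ := by simp_rw [hsplit s hs']
      have h3 : Summable fun m => c ^ m * ψ ((1 / 2) ^ m / s) := by
        simp_rw [← hsplit s hs']
        exact (hsum s).mul_left _
      refine (ENNReal.ofReal_le_ofReal h2).trans ?_
      rw [ENNReal.ofReal_mul hK, ENNReal.ofReal_tsum_of_nonneg
        (fun m => mul_nonneg (by positivity) (hψ _ (by positivity))) h3]
      simp_rw [ENNReal.ofReal_mul (pow_nonneg hc0.le _)]
      exact le_rfl
    have hdiv : ∀ y : ℝ, 0 ≤ y → ENNReal.ofReal (y ^ q / s) =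
        ENNReal.ofReal y ^ q * ENNReal.ofReal s⁻¹ := by
      intro y hy
      rw [div_eq_mul_inv, ENNReal.ofReal_mul (by positivity),
        ENNReal.ofReal_rpow_of_nonneg hy hq0.le]
    rw [hdiv _ (mul_nonneg (by positivity) (hω s))]
    calc _ ≤ (ENNReal.ofReal K * ∑' m, w m * x m s) ^ q * ENNReal.ofReal s⁻¹ := by gcongr
      _ ≤ (ENNReal.ofReal K ^ q * ((∑' m, w m) ^ (q - 1) * ∑' m, w m * x m s ^ q)) *
          ENNReal.ofReal s⁻¹ := by
        rw [ENNReal.mul_rpow_of_nonneg _ _ hq0.le]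
        gcongr
        exact tsum_weight_rpow_le hq w fun m => x m s
      _ = _ := by
        rw [hW, mul_assoc, mul_assoc, ← ENNReal.tsum_mul_right]
        congr 3
        funext m
        rw [hdiv _ (hψ _ (by positivity)), mul_assoc]
  have hmeas : ∀ m : ℕ, AEMeasurable
      (fun s => w m * ENNReal.ofReal (ψ ((1 / 2) ^ m / s) ^ q / s))
      (volume.restrict (Set.Ioi (0 : ℝ))) := by
    intro m
    -- `s ↦ φ (2^{-m}/s)` is monotone on the half-line, hence measurable there
    have h1 : MonotoneOn (fun s => φ ((1 / 2) ^ m / s)) (Set.Ioi (0 : ℝ)) := by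
      intro s hs t ht hst
      have hs' : (0 : ℝ) < s := hs
      have ht' : (0 : ℝ) < t := ht
      refine hanti (Set.mem_Ioi.2 (by positivity)) (Set.mem_Ioi.2 (by positivity)) ?_
      gcongr
    have h2 := aemeasurable_restrict_of_monotoneOn (μ := volume) measurableSet_Ioi h1
    refine AEMeasurable.const_mul (AEMeasurable.ennreal_ofReal ?_) _
    refine AEMeasurable.div (AEMeasurable.pow_const ?_ q) aemeasurable_id
    refine AEMeasurable.mul ?_ h2
    exact (Measurable.pow_const (measurable_const.div measurable_id) α).aemeasurable
  have hint : ∫⁻ s in Set.Ioi (0 : ℝ), ENNReal.ofReal ((s ^ (-α) * ω s) ^ q / s) ≤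
      ENNReal.ofReal K ^ q * (ENNReal.ofReal (1 - c)⁻¹ ^ q * I) := by
    refine (setLIntegral_mono' measurableSet_Ioi hpt).trans (le_of_eq ?_)
    have hKtop : ENNReal.ofReal K ^ q ≠ ∞ :=
      ENNReal.rpow_ne_top_of_nonneg hq0.le ENNReal.ofReal_ne_top
    have hWtop : ENNReal.ofReal (1 - c)⁻¹ ^ (q - 1) ≠ ∞ :=
      ENNReal.rpow_ne_top_of_nonneg (by linarith) ENNReal.ofReal_ne_top
    rw [lintegral_const_mul' _ _ hKtop, lintegral_const_mul' _ _ hWtop, lintegral_tsum hmeas]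
    have hterm : ∀ m : ℕ, ∫⁻ s in Set.Ioi (0 : ℝ),
        w m * ENNReal.ofReal (ψ ((1 / 2) ^ m / s) ^ q / s) = w m * I := by
      intro m
      rw [lintegral_const_mul' _ _ ENNReal.ofReal_ne_top,
        lintegral_inv_scale (fun τ => ψ τ ^ q) (by positivity)]
    simp_rw [hterm]
    rw [ENNReal.tsum_mul_right, hW, ← mul_assoc (ENNReal.ofReal (1 - c)⁻¹ ^ (q - 1))]
    congr 2
    have := ENNReal.rpow_add_of_nonneg (x := ENNReal.ofReal (1 - c)⁻¹) (q - 1) 1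
      (by linarith) zero_le_one
    rw [sub_add_cancel, ENNReal.rpow_one] at this
    exact this.symm
  calc _ ≤ (ENNReal.ofReal K ^ q * (ENNReal.ofReal (1 - c)⁻¹ ^ q * I)) ^ (1 / q) := by gcongr
    _ = _ := by
      have hq1 : 0 ≤ 1 / q := by positivity
      rw [ENNReal.mul_rpow_of_nonneg _ _ hq1, ENNReal.mul_rpow_of_nonneg _ _ hq1,
        ← ENNReal.rpow_mul, ← ENNReal.rpow_mul, mul_one_div_cancel hq0.ne', ENNReal.rpow_one,
        ENNReal.rpow_one, ENNReal.ofReal_mul hK, mul_assoc]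

/-! ### Mellin translations form a commuting family of isometry groups -/

lemma mellinDilate_eq_toLin {n : ℕ} (j : Fin n) (t : ℝ) :
    mellinDilate j t =
      ⇑(Matrix.toLin' (Matrix.diagonal (Function.update (1 : Fin n → ℝ) j (Real.exp t)))) := by
  funext x i
  simp only [mellinDilate, Matrix.toLin'_apply, Matrix.mulVec_diagonal]
  by_cases h : i = j
  · subst h; simp
  · simp [h]

lemma map_mellinDilate_volume {n : ℕ} (j : Fin n) (t : ℝ) :
    ENNReal.ofReal (Real.exp t) • Measure.map (mellinDilate j t) volume =
      (volume : Measure (Fin n → ℝ)) := by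
  have hdet : (Matrix.diagonal (Function.update (1 : Fin n → ℝ) j (Real.exp t))).det =
      Real.exp t := by
    rw [Matrix.det_diagonal, Finset.prod_update_of_mem (Finset.mem_univ j)]
    simp
  have := Real.smul_map_diagonal_volume_pi
    (D := Function.update (1 : Fin n → ℝ) j (Real.exp t)) (by rw [hdet]; positivity)
  rwa [hdet, abs_of_pos (Real.exp_pos t), ← mellinDilate_eq_toLin] at this

lemma measurable_mellinDilate {n : ℕ} (j : Fin n) (t : ℝ) : Measurable (mellinDilate j t) := by
  rw [mellinDilate_eq_toLin]
  exact (LinearMap.continuous_of_finiteDimensional _).measurable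

/-- The pushforward of Lebesgue measure under the dilation is `e^{-t}` times Lebesgue measure, and
the density `ρ` satisfies `ρ(x) = e^t ρ(e^t x)`; the two factors cancel. -/
lemma measurePreserving_mellinDilate {n : ℕ} (j : Fin n) (t : ℝ) :
    MeasurePreserving (mellinDilate j t) (mellinMeasure n) (mellinMeasure n) := by
  refine ⟨measurable_mellinDilate j t, ?_⟩
  ext A hA
  rw [Measure.map_apply (measurable_mellinDilate j t) hA]
  let ρ : (Fin n → ℝ) → ℝ≥0∞ := fun x => ∏ i, ENNReal.ofReal (x i)⁻¹
  let P : Set (Fin n → ℝ) := {x | ∀ i, 0 < x i}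
  have hρ : Measurable ρ := by fun_prop
  have hP : MeasurableSet P := by
    have : P = ⋂ i, {x | 0 < x i} := by ext; simp [P]
    rw [this]
    exact MeasurableSet.iInter fun i => measurableSet_lt measurable_const (measurable_pi_apply i)
  have hval : ∀ B, MeasurableSet B → mellinMeasure n B = ∫⁻ x in B ∩ P, ρ x := by
    intro B hB
    rw [mellinMeasure, withDensity_apply _ hB, Measure.restrict_restrict hB]
  have hpre : mellinDilate j t ⁻¹' A ∩ P = mellinDilate j t ⁻¹' (A ∩ P) := by
    ext x
    simp only [Set.mem_inter_iff, Set.mem_preimage, and_congr_right_iff]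
    intro _
    refine forall_congr' fun i => ?_
    by_cases h : i = j
    · subst h; simp [mellinDilate, Real.exp_pos]
    · simp [mellinDilate, h]
  have hdens : ∀ x, ρ x = ENNReal.ofReal (Real.exp t) * ρ (mellinDilate j t x) := by
    intro x
    simp only [ρ]
    rw [← Finset.mul_prod_erase _ _ (Finset.mem_univ j),
      ← Finset.mul_prod_erase _ (fun i => ENNReal.ofReal (mellinDilate j t x i)⁻¹)
        (Finset.mem_univ j), ← mul_assoc]
    congr 1
    · rw [← ENNReal.ofReal_mul (Real.exp_pos t).le]
      congr 1
      simp only [mellinDilate, Function.update_self]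
      rw [mul_inv, ← mul_assoc, mul_inv_cancel₀ (Real.exp_pos t).ne', one_mul]
    · refine Finset.prod_congr rfl fun i hi => ?_
      simp [mellinDilate, Finset.ne_of_mem_erase hi]
  rw [hval _ (measurable_mellinDilate j t hA), hval _ hA, hpre]
  rw [lintegral_congr (μ := volume.restrict (mellinDilate j t ⁻¹' (A ∩ P))) hdens,
    lintegral_const_mul' _ _ ENNReal.ofReal_ne_top]
  rw [← setLIntegral_map (hA.inter hP) hρ (measurable_mellinDilate j t), ← smul_eq_mul,
    ← lintegral_smul_measure,
    ← Measure.restrict_smul, map_mellinDilate_volume]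

lemma mellinDilate_zero {n : ℕ} (j : Fin n) (x : Fin n → ℝ) : mellinDilate j 0 x = x := by
  simp [mellinDilate]

lemma mellinDilate_add {n : ℕ} (j : Fin n) (s t : ℝ) (x : Fin n → ℝ) :
    mellinDilate j (s + t) x = mellinDilate j t (mellinDilate j s x) := by
  simp only [mellinDilate, Function.update_self, Function.update_idem, Real.exp_add]
  congr 1
  ring

lemma mellinDilate_comm {n : ℕ} (i j : Fin n) (s t : ℝ) (x : Fin n → ℝ) :
    mellinDilate i s (mellinDilate j t x) = mellinDilate j t (mellinDilate i s x) := by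
  by_cases h : i = j
  · subst h
    rw [← mellinDilate_add, ← mellinDilate_add, add_comm]
  · simp only [mellinDilate, Function.update_of_ne h, Function.update_of_ne (Ne.symm h)]
    exact Function.update_comm (Ne.symm h) _ _ _

lemma IsMellinTranslation.isCommFamily {n : ℕ} {p : ℝ≥0∞} [Fact (1 ≤ p)]
    {U : Fin n → ℝ → (Lp ℂ p (mellinMeasure n) →L[ℂ] Lp ℂ p (mellinMeasure n))}
    (hU : IsMellinTranslation p U) : IsCommFamily U := by
  have hcomp : ∀ i j s t f, (U i s (U j t f) : (Fin n → ℝ) → ℂ) =ᵐ[mellinMeasure n]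
      fun x => f (mellinDilate j t (mellinDilate i s x)) := by
    intro i j s t f
    have h := (measurePreserving_mellinDilate i s).quasiMeasurePreserving.ae_eq_comp (hU j t f)
    filter_upwards [hU i s (U j t f), h] with x hx hx'
    exact hx.trans hx'
  refine ⟨fun j => ⟨?_, fun s t => ?_, fun t f => ?_⟩, fun i j s t => ?_⟩
  · refine ContinuousLinearMap.ext fun f => Lp.ext ((hU j 0 f).trans ?_)
    simp [mellinDilate_zero]
  · refine ContinuousLinearMap.ext fun f => Lp.ext ((hU j (s + t) f).trans ?_)
    refine EventuallyEq.trans ?_ (hcomp j j s t f).symm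
    simp [mellinDilate_add]
  · have : U j t f = Lp.compMeasurePreserving _ (measurePreserving_mellinDilate j t) f :=
      Lp.ext ((hU j t f).trans (Lp.coeFn_compMeasurePreserving f _).symm)
    rw [this, Lp.norm_compMeasurePreserving]
  · refine ContinuousLinearMap.ext fun f => Lp.ext ((hcomp i j s t f).trans ?_)
    refine EventuallyEq.trans ?_ (hcomp j i t s f).symm
    simp [mellinDilate_comm i j]

/-- **Inverse approximation theorem**: for `0 < α < r`, the Besov–Mellin norm
`‖f‖ + (∫₀^∞ (s^{-α} Ω^r_p(s,f))^q ds/s)^{1/q}` is bounded by a constant times the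
approximation-space norm `‖f‖ + (∫₀^∞ (τ^α E_p(τ,f))^q dτ/τ)^{1/q}`; in particular
`E_{α,q}(X^p, B)` embeds continuously into `B^α_{p,q}`. -/
theorem inverse_approximation_mellin {n : ℕ} (p : ℝ≥0∞) [Fact (1 ≤ p)] (hp : p ≠ ∞)
    (U : Fin n → ℝ → (Lp ℂ p (mellinMeasure n) →L[ℂ] Lp ℂ p (mellinMeasure n)))
    (hU : IsMellinTranslation p U)
    (r : ℕ) (α q : ℝ) (hq : 1 ≤ q) (hα : 0 < α) (hαr : α < (r : ℝ)) :
    ∃ C : ℝ, 0 < C ∧ ∀ f : Lp ℂ p (mellinMeasure n),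
      ENNReal.ofReal ‖f‖ + (∫⁻ s in Set.Ioi (0 : ℝ),
          ENNReal.ofReal ((s ^ (-α) * mixedMod U r s f) ^ q / s)) ^ (1 / q) ≤
        ENNReal.ofReal C *
          (ENNReal.ofReal ‖f‖ + (∫⁻ τ in Set.Ioi (0 : ℝ),
            ENNReal.ofReal ((τ ^ α * bestApproxMellin U τ f) ^ q / τ)) ^ (1 / q)) := by
  have hr : r ≠ 0 := by
    rintro rfl
    simp only [Nat.cast_zero] at hαr
    linarith
  have hfam := hU.isCommFamily
  set K : ℝ := n ^ r * (2 * (2 * Real.exp 1) ^ r) with hK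
  have hK0 : 0 ≤ K := by positivity
  set D : ℝ := K * (1 - (1 / 2 : ℝ) ^ ((r : ℝ) - α))⁻¹ with hD
  have hD0 : 0 ≤ D := by
    have : (1 / 2 : ℝ) ^ ((r : ℝ) - α) < 1 :=
      Real.rpow_lt_one (by norm_num) (by norm_num) (by linarith)
    exact mul_nonneg hK0 (inv_nonneg.2 (by linarith))
  refine ⟨1 + D, by linarith, fun f => ?_⟩
  have key := hardy_dyadic (φ := fun τ => bestApproxMellin U τ f)
    (ω := fun s => mixedMod U r s f) (fun τ => bestApprox_nonneg U τ f)
    (bestApprox_antitoneOn U f) hq hαr hK0 (fun s => mixedMod_nonneg U r s f)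
    (fun s => summable_dyadic U hr s f) fun s hs => mixedMod_le_dyadicSum hfam hr hs f
  rw [mul_add]
  refine add_le_add ?_ (key.trans ?_)
  · have : (1 : ℝ≥0∞) ≤ ENNReal.ofReal (1 + D) := by
      rw [← ENNReal.ofReal_one]
      exact ENNReal.ofReal_le_ofReal (by linarith)
    exact le_mul_of_one_le_left zero_le this
  · gcongr
    linarith
end
end
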